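/- arXiv:1410.6697 — 2 statements merged into one kernel-verified Lean document; each statement's English description precedes it below -/
import Mathlib

section
/- Let k ≥ 2 be an integer and J ⊆ (0,∞) a non-empty bounded open interval. Set L_k(t) := max_{1≤j≤k} j·t^{j−1}, and let d be any constant with 0 < d < 1/(2·sup_{t∈J} L_k(t)). Let Ψ : ℕ → (0,∞) satisfy Ψ(x) < d/x for all sufficiently large x and Ψ(l·x) ≤ l·Ψ(x) for all positive integers l, x. Then for every fixed constant c₀ with 0 < c₀ < 1, the set (𝒦_k(Ψ) \ 𝒦_k(c₀Ψ)) ∩ J is uncountable. -/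
open Filter Set

/-- `Kk k Ψ` is the set of real `ζ` not algebraic of degree at most `k` such that
`max_{1≤j≤k} |q·ζ^j - p_j| ≤ Ψ q` holds for infinitely many tuples
`(q, p₁, …, p_k) ∈ ℕ × ℤ^k` with `q ≥ 1`. -/
def Kk (k : ℕ) (Ψ : ℕ → ℝ) : Set ℝ :=
  {ζ : ℝ | (∀ P : Polynomial ℤ, P ≠ 0 → P.natDegree ≤ k → (Polynomial.aeval ζ) P ≠ 0) ∧
    {qp : ℕ × (Fin k → ℤ) | 1 ≤ qp.1 ∧
      ∀ j : Fin k, |(qp.1 : ℝ) * ζ ^ ((j : ℕ) + 1) - (qp.2 j : ℝ)| ≤ Ψ qp.1}.Infinite}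

/-- `Lk k t = max_{1≤j≤k} j·t^{j-1}`. -/
noncomputable def Lk (k : ℕ) (t : ℝ) : ℝ :=
  ⨆ j : Fin k, (((j : ℕ) : ℝ) + 1) * t ^ (j : ℕ)

/-!
Let `p₁, …, p_k` approximate `q ζ, …, q ζ ^ k` with errors less than a small multiple of `1 / q`,
and let `r = p₁ / q` have denominator `b`. Inductively `q r ^ j` is a fraction with denominator
dividing `b` that lies within `1 / b` of `p_j`, hence equals it, so that `b ^ k ∣ q`. Since
`Ψ (l x) ≤ l Ψ x`, transcendental points of `𝒦_k(Ψ)` are therefore those whose image on the moment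
curve `x ↦ (x, …, x ^ k)` is approximated by images of rationals of denominator `b` at rate
`φ b = Ψ (b ^ k) / b ^ k`, and `φ b = o(b⁻³)` because `k ≥ 2`.

For any curve that is Lipschitz and does not contract distances, and any such rate, around a
rational `r` there is an interval of length comparable to `φ b` on which `r` is a `φ`-approximation
but not a `c φ`-approximation. Nest such intervals around dyadic rationals with denominators
`q₀ < q₁ < …` that grow like `q_{n + 1} ≍ 1 / φ (q_n)`. For a point in all of them and a rational of
denominator `b` with `q_n < b ^ 2 ≤ q_{n + 1}`, the separation of distinct rationals by
`1 / (b q_n)` excludes a `c φ`-approximation. At each stage the next interval can avoid a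
prescribed point, so the points obtained in this way are uncountably many.
-/

open Metric NNReal

/-! ### Denominators -/

theorem one_div_den_le_abs {x : ℚ} (hx : x ≠ 0) : 1 / (x.den : ℝ) ≤ |(x : ℝ)| := by
  rw [Rat.cast_def, abs_div, Nat.abs_cast]
  gcongr
  exact_mod_cast Int.one_le_abs (Rat.num_ne_zero.2 hx)

theorem one_div_den_mul_den_le_abs_sub {r s : ℚ} (h : r ≠ s) :
    1 / ((r.den : ℝ) * s.den) ≤ |(r : ℝ) - s| := by
  have hle : (r - s).den ≤ r.den * s.den :=
    Nat.le_of_dvd (mul_pos r.den_pos s.den_pos) (Rat.sub_den_dvd r s)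
  calc 1 / ((r.den : ℝ) * s.den) ≤ 1 / ((r - s).den : ℝ) := by
        have := (r - s).den_pos
        gcongr
        exact_mod_cast hle
    _ ≤ |((r - s : ℚ) : ℝ)| := one_div_den_le_abs (sub_ne_zero.2 h)
    _ = |(r : ℝ) - s| := by rw [Rat.cast_sub]

theorem eq_of_two_mul_den_mul_dist_lt_one {r s : ℚ} {ζ : ℝ}
    (hr : 2 * (r.den * s.den) * dist ζ r < 1) (hs : 2 * (r.den * s.den) * dist ζ s ≤ 1) :
    r = s := by
  by_contra hne
  have hden : 0 < (r.den : ℝ) * s.den := by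
    have := r.den_pos
    have := s.den_pos
    positivity
  have hsep : 1 ≤ (r.den * s.den) * dist (r : ℝ) s :=
    (div_le_iff₀' hden).1 (one_div_den_mul_den_le_abs_sub hne)
  have htri := mul_le_mul_of_nonneg_left (dist_triangle_left (r : ℝ) s ζ) hden.le
  linarith

theorem den_dvd_of_natCast_mul_eq_intCast {n : ℕ} {x : ℚ} {p : ℤ} (h : (n : ℚ) * x = p) :
    x.den ∣ n := by
  rcases eq_or_ne n 0 with rfl | hn
  · exact dvd_zero _
  · have hx : x = Rat.divInt p n := by
      rw [Rat.divInt_eq_div, ← h, Int.cast_natCast, mul_div_cancel_left₀ _ (by exact_mod_cast hn)]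
    exact_mod_cast hx ▸ Rat.den_dvd p n

theorem mul_pow_succ_eq_intCast_of_abs_sub_lt {r : ℚ} {Q j : ℕ} {p : ℤ} (hQ : r.den ^ j ∣ Q)
    (h : |(Q : ℝ) * (r : ℝ) ^ (j + 1) - p| < 1 / r.den) : (Q : ℚ) * r ^ (j + 1) = p := by
  obtain ⟨s, rfl⟩ := hQ
  set x : ℚ := (r.den ^ j * s : ℕ) * r ^ (j + 1) with hx
  have hden : x.den ∣ r.den := by
    refine den_dvd_of_natCast_mul_eq_intCast (p := s * r.num ^ (j + 1)) ?_
    push_cast [hx]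
    rw [← Rat.den_mul_eq_num r]
    ring
  by_contra hne
  refine h.not_ge ?_
  calc 1 / (r.den : ℝ) ≤ 1 / ((x.den : ℝ) * (p : ℚ).den) := by
        have := x.den_pos
        have := Nat.le_of_dvd r.den_pos hden
        simp only [Rat.den_intCast, Nat.cast_one, mul_one]
        gcongr
    _ ≤ |(x : ℝ) - (p : ℚ)| := one_div_den_mul_den_le_abs_sub hne
    _ = _ := by push_cast [hx]; rfl

/-- Let `b = r.den`. If `b ^ j ∣ Q`, the denominator of `Q * r ^ (j + 1)` divides `b`, so `h` forces
this number to be the integer `p j`; as `r ^ (j + 1)` has denominator `b ^ (j + 1)`, this power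
divides `Q` too. -/
theorem den_pow_dvd_of_abs_mul_pow_sub_lt {k Q : ℕ} {r : ℚ} {p : Fin k → ℤ}
    (h : ∀ j : Fin k, |(Q : ℝ) * (r : ℝ) ^ ((j : ℕ) + 1) - p j| < 1 / r.den) :
    r.den ^ k ∣ Q := by
  induction k with
  | zero => simp
  | succ k ih =>
    have hk : r.den ^ k ∣ Q := ih (p := fun j => p j.castSucc) fun j => h j.castSucc
    have heq := mul_pow_succ_eq_intCast_of_abs_sub_lt hk (h (Fin.last k))
    simpa only [Rat.den_pow] using den_dvd_of_natCast_mul_eq_intCast heq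

theorem exists_rat_den_eq_two_pow {u v : ℝ} {m : ℕ} (h : 2 < (v - u) * 2 ^ m) :
    ∃ r : ℚ, r.den = 2 ^ m ∧ (r : ℝ) ∈ Ioo u v := by
  -- Fractions with odd numerator over `2 ^ m` are in lowest terms and have spacing `2 / 2 ^ m`.
  have hm : (0 : ℝ) < 2 ^ m := by positivity
  obtain ⟨n, hlow, hupp⟩ : ∃ n : ℤ, 2 ^ m * u < 2 * n + 1 ∧ (2 * n + 1 : ℝ) ≤ 2 ^ m * u + 2 :=
    ⟨⌊(2 ^ m * u + 1) / 2⌋, by linarith [Int.lt_floor_add_one ((2 ^ m * u + 1) / 2)],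
      by linarith [Int.floor_le ((2 ^ m * u + 1) / 2)]⟩
  have hcop : (2 * n + 1).natAbs.Coprime ((2 ^ m : ℤ)).natAbs := by
    rw [Int.natAbs_pow]
    exact (Int.natAbs_odd.2 ⟨n, rfl⟩).coprime_two_right.pow_right m
  refine ⟨((2 * n + 1 : ℤ) : ℚ) / ((2 ^ m : ℤ) : ℚ), ?_, ?_, ?_⟩
  · exact_mod_cast Rat.den_div_eq_of_coprime (by positivity) hcop
  · push_cast
    rw [lt_div_iff₀ hm]
    linarith
  · push_cast
    rw [div_lt_iff₀ hm]
    linarith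

/-! ### The moment curve -/

theorem finite_setOf_abs_sub_intCast_le {ι : Type*} [Finite ι] (x : ι → ℝ) (C : ℝ) :
    {p : ι → ℤ | ∀ i, |x i - p i| ≤ C}.Finite := by
  refine Set.Finite.pi' (t := fun i => {n : ℤ | |x i - n| ≤ C}) fun i => ?_
  have hpre : {n : ℤ | |x i - n| ≤ C} = (↑) ⁻¹' Icc (x i - C) (x i + C) := by
    ext n
    rw [mem_preimage, ← Real.closedBall_eq_Icc, mem_closedBall', Real.dist_eq, mem_ofPred_eq]
  rw [hpre, Int.preimage_Icc]
  exact finite_Icc _ _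

theorem infinite_iff_frequently_exists_of_finite_fibers {β : Type*} {s : Set (ℕ × β)}
    (hs : ∀ n, {b | (n, b) ∈ s}.Finite) :
    s.Infinite ↔ ∃ᶠ n in atTop, ∃ b, (n, b) ∈ s := by
  have himage : Prod.fst '' s = {n | ∃ b, (n, b) ∈ s} := by
    ext n
    simp
  rw [Nat.frequently_atTop_iff_infinite, ← himage]
  refine ⟨fun h hfin => h (Finite.of_finite_fibers Prod.fst hfin fun n _ => ?_),
    fun h => h.of_image _⟩
  refine ((hs n).image (Prod.mk n)).subset ?_
  rintro ⟨m, b⟩ ⟨hmb, rfl⟩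
  exact ⟨b, hmb, rfl⟩

theorem mem_Kk_iff {k : ℕ} {Ψ : ℕ → ℝ} {ζ : ℝ} :
    ζ ∈ Kk k Ψ ↔
      (∀ P : Polynomial ℤ, P ≠ 0 → P.natDegree ≤ k → (Polynomial.aeval ζ) P ≠ 0) ∧
      ∃ᶠ q : ℕ in atTop, ∃ p : Fin k → ℤ, ∀ j : Fin k,
        |(q : ℝ) * ζ ^ ((j : ℕ) + 1) - p j| ≤ Ψ q := by
  refine and_congr_right fun _ => ?_
  rw [infinite_iff_frequently_exists_of_finite_fibers fun q =>
    (finite_setOf_abs_sub_intCast_le (fun j : Fin k => (q : ℝ) * ζ ^ ((j : ℕ) + 1)) (Ψ q)).subset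
      fun p hp => hp.2]
  refine frequently_congr ((eventually_ge_atTop 1).mono fun q hq => ?_)
  simp only [mem_ofPred_eq, hq, true_and]

/-- The moment curve `x ↦ (x, x ^ 2, …, x ^ k)`. It takes values in `Fin k → ℝ`, whose sup metric
turns the maximum over `j` in `Kk` into a distance. -/
def momentCurve (k : ℕ) (x : ℝ) : Fin k → ℝ :=
  fun j => x ^ ((j : ℕ) + 1)

theorem antilipschitzWith_momentCurve {k : ℕ} (hk : 0 < k) :
    AntilipschitzWith 1 (momentCurve k) :=
  AntilipschitzWith.of_le_mul_dist fun x y => by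
    simpa [momentCurve] using dist_le_pi_dist (momentCurve k x) (momentCurve k y) ⟨0, hk⟩

theorem mul_pow_le_Lk {k : ℕ} (t : ℝ) (j : Fin k) : ((j : ℝ) + 1) * t ^ (j : ℕ) ≤ Lk k t :=
  le_ciSup (f := fun j : Fin k => ((j : ℝ) + 1) * t ^ (j : ℕ)) (finite_range _).bddAbove j

theorem Lk_le_Lk {k : ℕ} {s t : ℝ} (hs : 0 ≤ s) (hst : s ≤ t) : Lk k s ≤ Lk k t :=
  ciSup_mono (finite_range _).bddAbove fun j => by gcongr

theorem one_le_Lk {k : ℕ} (hk : 0 < k) (t : ℝ) : 1 ≤ Lk k t := by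
  simpa using mul_pow_le_Lk t ⟨0, hk⟩

theorem Lk_nonneg (k : ℕ) (t : ℝ) : 0 ≤ Lk k t := by
  rcases k.eq_zero_or_pos with rfl | hk
  · simp [Lk]
  · exact zero_le_one.trans (one_le_Lk hk t)

theorem bddAbove_Lk_image_Ioo {k : ℕ} {α β : ℝ} (hα : 0 ≤ α) :
    BddAbove (Lk k '' Ioo α β) := by
  refine ⟨Lk k β, ?_⟩
  rintro _ ⟨t, ht, rfl⟩
  exact Lk_le_Lk (hα.trans ht.1.le) ht.2.le

theorem one_le_sSup_Lk {k : ℕ} (hk : 0 < k) {α β : ℝ} (hα : 0 ≤ α) (hαβ : α < β) :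
    1 ≤ sSup (Lk k '' Ioo α β) := by
  obtain ⟨t, ht⟩ := nonempty_Ioo.2 hαβ
  exact (one_le_Lk hk t).trans (le_csSup (bddAbove_Lk_image_Ioo hα) (mem_image_of_mem _ ht))

theorem dist_momentCurve_le {k : ℕ} {x y : ℝ} (hx : 0 ≤ x) (hy : 0 ≤ y) :
    dist (momentCurve k x) (momentCurve k y) ≤ Lk k (max x y) * dist x y := by
  refine (dist_pi_le_iff (mul_nonneg (Lk_nonneg _ _) dist_nonneg)).2 fun j => ?_
  calc |x ^ ((j : ℕ) + 1) - y ^ ((j : ℕ) + 1)|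
      ≤ |x - y| * ((j : ℕ) + 1 : ℕ) * max |x| |y| ^ (j : ℕ) := abs_pow_sub_pow_le x y _
    _ = ((j : ℝ) + 1) * max x y ^ (j : ℕ) * |x - y| := by
        rw [abs_of_nonneg hx, abs_of_nonneg hy]
        push_cast
        ring
    _ ≤ Lk k (max x y) * |x - y| := by
        gcongr
        exact mul_pow_le_Lk _ j

theorem lipschitzOnWith_momentCurve {k : ℕ} {α β : ℝ} (hα : 0 ≤ α) :
    LipschitzOnWith (sSup (Lk k '' Ioo α β)).toNNReal (momentCurve k) (Ioo α β) := by
  refine LipschitzOnWith.of_dist_le_mul fun x hx y hy => ?_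
  have hmax : max x y ∈ Ioo α β := ⟨lt_max_of_lt_left hx.1, max_lt hx.2 hy.2⟩
  refine (dist_momentCurve_le (hα.trans hx.1.le) (hα.trans hy.1.le)).trans ?_
  gcongr
  exact (le_csSup (bddAbove_Lk_image_Ioo hα) (mem_image_of_mem _ hmax)).trans
    (Real.le_coe_toNNReal _)

/-- The parameters `ζ` such that `γ ζ` is within `φ b` of `γ r` for rationals `r` of infinitely many
reduced denominators `b`. -/
def ratApproxSet {E : Type*} [PseudoMetricSpace E] (γ : ℝ → E) (φ : ℕ → ℝ) : Set ℝ :=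
  {ζ | ∃ᶠ b : ℕ in atTop, ∃ r : ℚ, r.den = b ∧ dist (γ ζ) (γ r) ≤ φ b}

/-- The rate `Ψ q / q` at `q = b ^ k`, the least common denominator of the powers `r, …, r ^ k` of a
rational `r` with denominator `b`. -/
noncomputable def powRate (k : ℕ) (Ψ : ℕ → ℝ) (b : ℕ) : ℝ :=
  Ψ (b ^ k) / (b : ℝ) ^ k

theorem exists_intCast_eq_den_pow_mul_pow (r : ℚ) {j k : ℕ} (hjk : j ≤ k) :
    ∃ p : ℤ, (p : ℝ) = (r.den : ℝ) ^ k * (r : ℝ) ^ j := by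
  refine ⟨r.den ^ (k - j) * r.num ^ j, ?_⟩
  have hnum : (r.num : ℝ) = r.den * r := by exact_mod_cast (Rat.den_mul_eq_num r).symm
  push_cast
  rw [hnum, mul_pow, ← mul_assoc, pow_sub_mul_pow _ hjk]

theorem frequently_of_mem_ratApproxSet {k : ℕ} (hk : 0 < k) {Ψ : ℕ → ℝ} {ζ : ℝ}
    (hζ : ζ ∈ ratApproxSet (momentCurve k) (powRate k Ψ)) :
    ∃ᶠ q : ℕ in atTop, ∃ p : Fin k → ℤ, ∀ j : Fin k,
      |(q : ℝ) * ζ ^ ((j : ℕ) + 1) - p j| ≤ Ψ q := by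
  refine (tendsto_pow_atTop hk.ne').frequently (hζ.mono ?_)
  rintro _ ⟨r, rfl, hr⟩
  have hden : 0 < (r.den : ℝ) ^ k := by
    have := r.den_pos
    positivity
  choose p hp using fun j : Fin k => exists_intCast_eq_den_pow_mul_pow r j.isLt
  refine ⟨p, fun j => ?_⟩
  rw [hp, Nat.cast_pow, ← mul_sub, abs_mul, abs_of_pos hden, mul_comm, ← le_div_iff₀ hden]
  exact (dist_le_pi_dist (momentCurve k ζ) (momentCurve k r) j).trans hr

theorem mul_dist_le_of_abs_mul_sub_le {ζ C : ℝ} {Q : ℕ} {r : ℚ} {p : ℤ}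
    (hr : (Q : ℚ) * r = p) (h : |(Q : ℝ) * ζ - p| ≤ C) : Q * dist ζ r ≤ C := by
  have hr' : (Q : ℝ) * r = p := by exact_mod_cast hr
  rwa [← hr', ← mul_sub, abs_mul, Nat.abs_cast] at h

theorem abs_mul_pow_sub_lt_one_div_den {k : ℕ} (hk : 0 < k) {ζ C : ℝ} {K : ℝ≥0} {Q : ℕ}
    (hQ : 0 < Q) {p : Fin k → ℤ} {r : ℚ} (hr : (Q : ℚ) * r = p ⟨0, hk⟩)
    (hlip : dist (momentCurve k ζ) (momentCurve k r) ≤ K * dist ζ r)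
    (hC : (1 + K) * (Q * C) < 1)
    (hp : ∀ j : Fin k, |(Q : ℝ) * ζ ^ ((j : ℕ) + 1) - p j| ≤ C) (j : Fin k) :
    |(Q : ℝ) * (r : ℝ) ^ ((j : ℕ) + 1) - p j| < 1 / r.den := by
  have hQ' : (0 : ℝ) < Q := by exact_mod_cast hQ
  have hdenQ : (r.den : ℝ) ≤ Q := by
    exact_mod_cast Nat.le_of_dvd hQ (den_dvd_of_natCast_mul_eq_intCast hr)
  have hζr : Q * dist ζ r ≤ C :=
    mul_dist_le_of_abs_mul_sub_le hr (by simpa using hp ⟨0, hk⟩)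
  have hdist : Q * dist (momentCurve k ζ) (momentCurve k r) ≤ K * C :=
    calc Q * dist (momentCurve k ζ) (momentCurve k r) ≤ Q * (K * dist ζ r) := by gcongr
      _ = K * (Q * dist ζ r) := by ring
      _ ≤ K * C := by gcongr
  calc |(Q : ℝ) * (r : ℝ) ^ ((j : ℕ) + 1) - p j|
      ≤ |(Q : ℝ) * (r : ℝ) ^ ((j : ℕ) + 1) - Q * ζ ^ ((j : ℕ) + 1)| +
        |(Q : ℝ) * ζ ^ ((j : ℕ) + 1) - p j| := abs_sub_le _ _ _
    _ ≤ Q * dist (momentCurve k ζ) (momentCurve k r) + C := by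
        rw [← mul_sub, abs_mul, abs_of_pos hQ', abs_sub_comm]
        gcongr
        · exact dist_le_pi_dist (momentCurve k ζ) (momentCurve k r) j
        · exact hp j
    _ ≤ (1 + K) * C := by linarith
    _ < 1 / Q := by
        rw [lt_div_iff₀ hQ']
        linarith
    _ ≤ 1 / r.den := by
        have := r.den_pos
        gcongr

theorem dist_momentCurve_le_div {k : ℕ} {ζ C : ℝ} (hC : 0 ≤ C) {Q : ℕ} (hQ : 0 < Q)
    {p : Fin k → ℤ} {r : ℚ} (hp : ∀ j : Fin k, |(Q : ℝ) * ζ ^ ((j : ℕ) + 1) - p j| ≤ C)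
    (hr : ∀ j : Fin k, (Q : ℚ) * r ^ ((j : ℕ) + 1) = p j) :
    dist (momentCurve k ζ) (momentCurve k r) ≤ C / Q := by
  refine (dist_pi_le_iff (by positivity)).2 fun j => ?_
  rw [le_div_iff₀' (by exact_mod_cast hQ)]
  simpa [momentCurve] using mul_dist_le_of_abs_mul_sub_le (r := r ^ ((j : ℕ) + 1)) (hr j) (hp j)

theorem den_pow_dvd_and_dist_le_div {k : ℕ} (hk : 0 < k) {ζ C : ℝ} {K : ℝ≥0} {Q : ℕ}
    (hQ : 0 < Q) {p : Fin k → ℤ} {r : ℚ} (hr : (Q : ℚ) * r = p ⟨0, hk⟩)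
    (hlip : dist (momentCurve k ζ) (momentCurve k r) ≤ K * dist ζ r)
    (hC : (1 + K) * (Q * C) < 1)
    (hp : ∀ j : Fin k, |(Q : ℝ) * ζ ^ ((j : ℕ) + 1) - p j| ≤ C) :
    r.den ^ k ∣ Q ∧ dist (momentCurve k ζ) (momentCurve k r) ≤ C / Q := by
  have hclose := abs_mul_pow_sub_lt_one_div_den hk hQ hr hlip hC hp
  have hdvd : r.den ^ k ∣ Q := den_pow_dvd_of_abs_mul_pow_sub_lt hclose
  exact ⟨hdvd, dist_momentCurve_le_div ((abs_nonneg _).trans (hp ⟨0, hk⟩)) hQ hp fun j =>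
    mul_pow_succ_eq_intCast_of_abs_sub_lt ((pow_dvd_pow _ j.isLt.le).trans hdvd) (hclose j)⟩

theorem div_le_powRate {k : ℕ} {Ψ : ℕ → ℝ}
    (hΨ : ∀ l x : ℕ, 1 ≤ l → 1 ≤ x → Ψ (l * x) ≤ (l : ℝ) * Ψ x)
    {b Q : ℕ} (hb : 0 < b) (hQ : 0 < Q) (hdvd : b ^ k ∣ Q) :
    Ψ Q / Q ≤ powRate k Ψ b := by
  obtain ⟨l, rfl⟩ := hdvd
  have hl : 0 < l := Nat.pos_of_mul_pos_left hQ
  have hb' : (0 : ℝ) < (b : ℝ) ^ k := by positivity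
  rw [powRate, div_le_div_iff₀ (by exact_mod_cast hQ) hb', mul_comm (b ^ k) l]
  calc Ψ (l * b ^ k) * (b : ℝ) ^ k ≤ l * Ψ (b ^ k) * (b : ℝ) ^ k := by
        gcongr
        exact hΨ l (b ^ k) hl (Nat.pow_pos hb)
    _ = Ψ (b ^ k) * (l * b ^ k : ℕ) := by
        push_cast
        ring

theorem exists_pos_forall_dist_lt_imp_lt_den {ζ : ℝ} (hζ : Irrational ζ) (B : ℕ) :
    ∃ ε > 0, ∀ r : ℚ, dist ζ r < ε → B < r.den := by
  obtain ⟨ε, hε, hpos⟩ :=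
    (((hζ.eventually_forall_le_dist_cast_rat_of_den_le B).filter_mono
      nhdsWithin_le_nhds).and (self_mem_nhdsWithin (s := Ioi 0))).exists
  exact ⟨ε, hpos, fun r hr => not_le.1 fun hden => hr.not_ge (hε r hden)⟩

theorem mem_ratApproxSet_of_frequently {k : ℕ} (hk : 0 < k) {Ψ : ℕ → ℝ} {ζ : ℝ} {U : Set ℝ}
    {K : ℝ≥0} (hU : U ∈ nhds ζ) (hζ : Irrational ζ) (hlip : LipschitzOnWith K (momentCurve k) U)
    (hsmall : ∀ᶠ q : ℕ in atTop, (1 + K) * (q * Ψ q) < 1)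
    (hΨ : ∀ l x : ℕ, 1 ≤ l → 1 ≤ x → Ψ (l * x) ≤ (l : ℝ) * Ψ x)
    (h : ∃ᶠ q : ℕ in atTop, ∃ p : Fin k → ℤ, ∀ j : Fin k,
      |(q : ℝ) * ζ ^ ((j : ℕ) + 1) - p j| ≤ Ψ q) :
    ζ ∈ ratApproxSet (momentCurve k) (powRate k Ψ) := by
  refine frequently_atTop.2 fun B => ?_
  obtain ⟨ε, hε, hden⟩ := exists_pos_forall_dist_lt_imp_lt_den hζ B
  obtain ⟨δ, hδ, hball⟩ := Metric.mem_nhds_iff.1 hU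
  have hlarge : ∀ᶠ q : ℕ in atTop, 1 / (q : ℝ) < min ε δ :=
    (tendsto_one_div_atTop_nhds_zero_nat (𝕜 := ℝ)).eventually_lt_const (lt_min hε hδ)
  obtain ⟨Q, ⟨p, hp⟩, hQsmall, hQlarge, hQ⟩ :=
    (h.and_eventually (hsmall.and (hlarge.and (eventually_gt_atTop 0)))).exists
  have hQ' : (1 : ℝ) ≤ Q := by exact_mod_cast hQ
  set r : ℚ := p ⟨0, hk⟩ / Q with hr
  have hQr : (Q : ℚ) * r = p ⟨0, hk⟩ := by
    rw [hr]
    field_simp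
  have hζr : dist ζ r < min ε δ := by
    have hQζr : Q * dist ζ r ≤ Ψ Q :=
      mul_dist_le_of_abs_mul_sub_le hQr (by simpa using hp ⟨0, hk⟩)
    have hKQΨ : 0 ≤ (K : ℝ) * (Q * Ψ Q) := by
      have := (abs_nonneg _).trans (hp ⟨0, hk⟩)
      positivity
    refine lt_of_le_of_lt ?_ hQlarge
    rw [le_div_iff₀ (by linarith)]
    nlinarith [dist_nonneg (x := ζ) (y := (r : ℝ))]
  have hrU : (r : ℝ) ∈ U := hball (mem_ball'.2 (hζr.trans_le (min_le_right _ _)))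
  obtain ⟨hdvd, hdist⟩ := den_pow_dvd_and_dist_le_div hk hQ hQr
    (hlip.dist_le_mul _ (mem_of_mem_nhds hU) _ hrU) hQsmall hp
  exact ⟨r.den, (hden r (hζr.trans_le (min_le_left _ _))).le, r, rfl,
    hdist.trans (div_le_powRate hΨ r.den_pos hQ hdvd)⟩

/-! ### Nested windows around dyadic rationals -/

theorem not_countable_of_refinement {X σ : Type*} [TopologicalSpace X] [T2Space X] [Nonempty σ]
    {I : σ → Set X} {R : σ → σ → Prop} (hcompact : ∀ s, IsCompact (I s))
    (hne : ∀ s, (I s).Nonempty) (hrefine : ∀ s x, ∃ t, R s t ∧ I t ⊆ I s ∧ x ∉ I t) :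
    ¬ {x | ∃ s : ℕ → σ, ∀ n, R (s n) (s (n + 1)) ∧ x ∈ I (s n)}.Countable := by
  intro hcount
  -- Against an enumeration `f` of the limit points, let stage `n + 1` avoid `f n`.
  obtain ⟨s₀⟩ := ‹Nonempty σ›
  have : Nonempty X := (hne s₀).to_type
  obtain ⟨f, hf⟩ := countable_iff_exists_subset_range.1 hcount
  choose next hR hsub hnotMem using hrefine
  let s : ℕ → σ := fun n => Nat.rec s₀ (fun i t => next t (f i)) n
  obtain ⟨x, hx⟩ := IsCompact.nonempty_iInter_of_sequence_nonempty_isCompact_isClosed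
    (fun n => I (s n)) (fun n => hsub (s n) (f n)) (fun n => hne _) (hcompact _)
    fun n => (hcompact _).isClosed
  rw [mem_iInter] at hx
  obtain ⟨n, rfl⟩ := hf ⟨s, fun n => ⟨hR (s n) (f n), hx n⟩⟩
  exact hnotMem (s n) (f n) (hx (n + 1))

theorem exists_closedBall_third_subset_notMem (w x : ℝ) {ρ : ℝ} (hρ : 0 < ρ) :
    ∃ a, closedBall a (ρ / 3) ⊆ closedBall w ρ ∧ x ∉ closedBall a (ρ / 3) := by
  simp only [Real.closedBall_eq_Icc, mem_Icc, not_and_or, not_le]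
  rcases le_total x w with hx | hx
  · exact ⟨w + ρ / 2, Icc_subset_Icc (by linarith) (by linarith), Or.inl (by linarith)⟩
  · exact ⟨w - ρ / 2, Icc_subset_Icc (by linarith) (by linarith), Or.inr (by linarith)⟩

/-- The radius of a window in units of `φ b`: by the `K`-Lipschitz bound, moving a parameter by
`windowRatio K c * φ b` changes a distance of `(1 + c) / 2 * φ b` along the curve by at most
`(1 - c) / 4 * φ b`, so that it stays in `(c * φ b, φ b]`. -/
noncomputable def windowRatio (K : ℝ≥0) (c : ℝ) : ℝ :=
  (1 - c) / (4 * (K + 1))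

theorem windowRatio_pos {K : ℝ≥0} {c : ℝ} (hc : c < 1) : 0 < windowRatio K c :=
  div_pos (sub_pos.2 hc) (by positivity)

theorem mul_windowRatio_le {K : ℝ≥0} {c : ℝ} (hc : c < 1) :
    K * windowRatio K c ≤ (1 - c) / 4 := by
  rw [windowRatio, mul_div_assoc', div_le_div_iff₀ (by positivity) (by norm_num)]
  nlinarith

theorem windowRatio_le_one {K : ℝ≥0} {c : ℝ} (hc : 0 ≤ c) : windowRatio K c ≤ 1 := by
  rw [windowRatio, div_le_one (by positivity)]
  linarith [K.2]

section Windows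

variable {E : Type*} [PseudoMetricSpace E] {γ : ℝ → E} {U : Set ℝ} {K : ℝ≥0} {φ : ℕ → ℝ}
  {c : ℝ} {M : ℕ}

theorem exists_dist_eq_of_closedBall_subset (hlip : LipschitzOnWith K γ U)
    (hexp : AntilipschitzWith 1 γ) {r δ t : ℝ} (hU : closedBall r δ ⊆ U) (ht : t ∈ Icc 0 δ) :
    ∃ w ∈ closedBall r δ, dist (γ w) (γ r) = t := by
  have hδ : 0 ≤ δ := ht.1.trans ht.2
  have hIcc : Icc r (r + δ) ⊆ closedBall r δ := by
    rw [Real.closedBall_eq_Icc]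
    exact Icc_subset_Icc_left (by linarith)
  have hcont : ContinuousOn (fun w => dist (γ w) (γ r)) (Icc r (r + δ)) := fun w hw =>
    Tendsto.dist (hlip.continuousOn.mono (hIcc.trans hU) w hw) tendsto_const_nhds
  have hend : δ ≤ dist (γ (r + δ)) (γ r) := by
    simpa [abs_of_nonneg hδ] using hexp.le_mul_dist (r + δ) r
  obtain ⟨w, hw, hwt⟩ := intermediate_value_Icc (by linarith) hcont
    ⟨(dist_self (γ r)).trans_le ht.1, ht.2.trans hend⟩
  exact ⟨w, hIcc hw, hwt⟩

theorem exists_closedBall_forall_dist_mem_Ioc (hlip : LipschitzOnWith K γ U)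
    (hexp : AntilipschitzWith 1 γ) (hc₀ : 0 ≤ c) (hc₁ : c < 1) {r δ : ℝ} (hδ : 0 < δ)
    (hU : closedBall r (2 * δ) ⊆ U) :
    ∃ w, closedBall w (windowRatio K c * δ) ⊆ closedBall r (2 * δ) ∧
      ∀ ζ ∈ closedBall w (windowRatio K c * δ), dist (γ ζ) (γ r) ∈ Ioc (c * δ) δ := by
  obtain ⟨w, hw, hwr⟩ := exists_dist_eq_of_closedBall_subset hlip hexp
    ((closedBall_subset_closedBall (by linarith)).trans hU)
    (show (1 + c) / 2 * δ ∈ Icc 0 δ from ⟨by positivity, by nlinarith⟩)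
  have hsub : closedBall w (windowRatio K c * δ) ⊆ closedBall r (2 * δ) := by
    refine closedBall_subset_closedBall' ?_
    nlinarith [mem_closedBall.1 hw, windowRatio_le_one (K := K) hc₀]
  refine ⟨w, hsub, fun ζ hζ => ?_⟩
  have hζw : dist (γ ζ) (γ w) ≤ (1 - c) / 4 * δ :=
    calc dist (γ ζ) (γ w) ≤ K * dist ζ w :=
          hlip.dist_le_mul _ (hU (hsub hζ)) _
            (hU (hsub (mem_closedBall_self (by have := windowRatio_pos (K := K) hc₁; positivity))))
      _ ≤ K * (windowRatio K c * δ) := by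
          gcongr
          exact hζ
      _ = K * windowRatio K c * δ := by ring
      _ ≤ (1 - c) / 4 * δ := by
          gcongr
          exact mul_windowRatio_le hc₁
  have hupper := dist_triangle (γ ζ) (γ w) (γ r)
  have hlower := dist_triangle_left (γ w) (γ r) (γ ζ)
  constructor <;> nlinarith

/-- A closed interval in `U`, of radius `windowRatio K c * φ b`, at all points of which the
rational `rat` of denominator `b ≥ M` is a `φ`-approximation but not a `c * φ`-approximation along
the curve `γ`. -/
structure Window (γ : ℝ → E) (U : Set ℝ) (K : ℝ≥0) (φ : ℕ → ℝ) (c : ℝ) (M : ℕ) where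
  rat : ℚ
  center : ℝ
  le_den : M ≤ rat.den
  closedBall_subset : closedBall center (windowRatio K c * φ rat.den) ⊆ U
  dist_mem : ∀ ζ ∈ closedBall center (windowRatio K c * φ rat.den),
    dist (γ ζ) (γ rat) ∈ Ioc (c * φ rat.den) (φ rat.den)

/-- The interval underlying a window. -/
def Window.ball (W : Window γ U K φ c M) : Set ℝ :=
  closedBall W.center (windowRatio K c * φ W.rat.den)

/-- The growth condition on the denominators `q₀ < q₁` of consecutive windows. The upper bound on
`q₁` says that `φ q₀ ≤ 1 / (2 * b * q₀)` whenever `b ^ 2 ≤ q₁`. -/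
def Window.Precedes (W₀ W₁ : Window γ U K φ c M) : Prop :=
  W₀.rat.den < W₁.rat.den ∧ (2 * W₀.rat.den * φ W₀.rat.den) ^ 2 * W₁.rat.den ≤ 1

/-- The rate `φ b` is positive and at most `κ / (48 * b ^ 3)` from `M > 0` on. The factor `48`
leaves room for a power of two between `6 / (κ * φ b)` and `1 / (2 * b * φ b) ^ 2`. -/
structure IsSmallFrom (φ : ℕ → ℝ) (κ : ℝ) (M : ℕ) : Prop where
  pos : 0 < M
  rate_pos : ∀ b ≥ M, 0 < φ b
  rate_le : ∀ b ≥ M, 48 * (b : ℝ) ^ 3 * φ b ≤ κ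

theorem exists_isSmallFrom {κ : ℝ} (hκ : 0 < κ) (hpos : ∀ᶠ b in atTop, 0 < φ b)
    (hsmall : Tendsto (fun b : ℕ => (b : ℝ) ^ 3 * φ b) atTop (nhds 0)) :
    ∃ M, IsSmallFrom φ κ M := by
  have hle : ∀ᶠ b : ℕ in atTop, (b : ℝ) ^ 3 * φ b ≤ κ / 48 :=
    hsmall.eventually_le_const (by positivity)
  obtain ⟨M, hM⟩ := eventually_atTop.1 (hpos.and (hle.and (eventually_gt_atTop 0)))
  exact ⟨M, (hM M le_rfl).2.2, fun b hb => (hM b hb).1, fun b hb => by linarith [(hM b hb).2.1]⟩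

theorem exists_window_subset_closedBall (hlip : LipschitzOnWith K γ U)
    (hexp : AntilipschitzWith 1 γ) (hc₀ : 0 ≤ c) (hc₁ : c < 1)
    (hφ : IsSmallFrom φ (windowRatio K c) M) {a ρ : ℝ} {m : ℕ}
    (hU : closedBall a ρ ⊆ U) (hm : M ≤ 2 ^ m) (hρ : 2 < ρ * 2 ^ m) :
    ∃ W : Window γ U K φ c M, W.rat.den = 2 ^ m ∧ W.ball ⊆ closedBall a ρ := by
  obtain ⟨r, hden, hr⟩ := exists_rat_den_eq_two_pow (u := a - ρ / 2) (v := a + ρ / 2) (m := m)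
    (by linarith)
  have hφden : φ r.den ≤ ρ / 4 := by
    have hb : (1 : ℝ) ≤ (2 ^ m : ℕ) := by exact_mod_cast Nat.one_le_two_pow
    have hb3 : ((2 ^ m : ℕ) : ℝ) ≤ ((2 ^ m : ℕ) : ℝ) ^ 3 := le_self_pow₀ hb (by norm_num)
    have hle := (hφ.rate_le _ hm).trans (windowRatio_le_one hc₀)
    have hpos := hφ.rate_pos _ hm
    rw [hden]
    push_cast at *
    nlinarith
  have hball : closedBall (r : ℝ) (2 * φ r.den) ⊆ closedBall a ρ := by
    refine closedBall_subset_closedBall' ?_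
    have : dist (r : ℝ) a ≤ ρ / 2 := by
      rw [Real.dist_eq, abs_le]
      constructor <;> linarith [hr.1, hr.2]
    linarith
  obtain ⟨w, hsub, hdist⟩ := exists_closedBall_forall_dist_mem_Ioc hlip hexp hc₀ hc₁
    (hφ.rate_pos _ (hden ▸ hm)) (hball.trans hU)
  exact ⟨⟨r, w, hden ▸ hm, (hsub.trans hball).trans hU, hdist⟩, hden, hsub.trans hball⟩

theorem exists_two_pow_bounds (hc₀ : 0 ≤ c) (hc₁ : c < 1)
    (hφ : IsSmallFrom φ (windowRatio K c) M) {b : ℕ} (hb : M ≤ b) :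
    ∃ m : ℕ, b < 2 ^ m ∧ 2 < windowRatio K c * φ b / 3 * 2 ^ m ∧
      (2 * b * φ b) ^ 2 * 2 ^ m ≤ 1 := by
  have hκ := windowRatio_pos (K := K) hc₁
  have hκ₁ := windowRatio_le_one (K := K) hc₀
  have hφb := hφ.rate_pos b hb
  have hφle := hφ.rate_le b hb
  have hb₁ : (1 : ℝ) ≤ b := by exact_mod_cast hφ.pos.trans_le hb
  set κ := windowRatio K c
  set ρ := κ * φ b with hρ
  have hρ₀ : 0 < ρ := by positivity
  have hb3 : (b : ℝ) ≤ (b : ℝ) ^ 3 := le_self_pow₀ hb₁ (by norm_num)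
  have hb2 : (b : ℝ) ^ 2 ≤ (b : ℝ) ^ 3 := pow_le_pow_right₀ hb₁ (by norm_num)
  have hbφ : b * φ b ≤ 1 := by nlinarith [hb3]
  have hbρ : b * ρ ≤ 1 :=
    calc b * ρ = κ * (b * φ b) := by
          rw [hρ]
          ring
      _ ≤ 1 := mul_le_one₀ hκ₁ (by positivity) hbφ
  obtain ⟨n, hle, hlt⟩ := exists_nat_pow_near (x := 6 / ρ) (y := (2 : ℝ))
    (by rw [le_div_iff₀ hρ₀]; nlinarith) one_lt_two
  rw [le_div_iff₀ hρ₀] at hle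
  rw [div_lt_iff₀ hρ₀] at hlt
  refine ⟨n + 1, ?_, by linarith, ?_⟩
  · have : (b : ℝ) < 2 ^ (n + 1) := lt_of_mul_lt_mul_right (by linarith) hρ₀.le
    exact_mod_cast this
  · refine le_of_mul_le_mul_right ?_ hκ
    calc (2 * b * φ b) ^ 2 * 2 ^ (n + 1) * κ = 8 * (b : ℝ) ^ 2 * φ b * (2 ^ n * ρ) := by
          rw [hρ]
          ring
      _ ≤ 8 * (b : ℝ) ^ 3 * φ b * 6 := by gcongr
      _ = 48 * (b : ℝ) ^ 3 * φ b := by ring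
      _ ≤ 1 * κ := by rwa [one_mul]

theorem Window.exists_precedes_notMem (hlip : LipschitzOnWith K γ U)
    (hexp : AntilipschitzWith 1 γ) (hc₀ : 0 ≤ c) (hc₁ : c < 1)
    (hφ : IsSmallFrom φ (windowRatio K c) M) (W : Window γ U K φ c M) (x : ℝ) :
    ∃ W' : Window γ U K φ c M, W.Precedes W' ∧ W'.ball ⊆ W.ball ∧ x ∉ W'.ball := by
  have hρ : 0 < windowRatio K c * φ W.rat.den :=
    mul_pos (windowRatio_pos hc₁) (hφ.rate_pos _ W.le_den)
  obtain ⟨a, hsub, hx⟩ := exists_closedBall_third_subset_notMem W.center x hρ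
  obtain ⟨m, hden, hlarge, hsmall⟩ := exists_two_pow_bounds hc₀ hc₁ hφ W.le_den
  obtain ⟨W', hW', hball⟩ := exists_window_subset_closedBall hlip hexp hc₀ hc₁ hφ
    (hsub.trans W.closedBall_subset) (W.le_den.trans hden.le) hlarge
  refine ⟨W', ⟨hW' ▸ hden, ?_⟩, hball.trans hsub, fun h => hx (hball h)⟩
  rw [hW']
  exact_mod_cast hsmall

theorem nonempty_window (hlip : LipschitzOnWith K γ U)
    (hexp : AntilipschitzWith 1 γ) (hc₀ : 0 ≤ c) (hc₁ : c < 1)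
    (hφ : IsSmallFrom φ (windowRatio K c) M) (hU : (interior U).Nonempty) :
    Nonempty (Window γ U K φ c M) := by
  obtain ⟨a, ha⟩ := hU
  obtain ⟨ρ, hρ, hsub⟩ := nhds_basis_closedBall.mem_iff.1 (mem_interior_iff_mem_nhds.1 ha)
  obtain ⟨m, hm⟩ := pow_unbounded_of_one_lt (max (M : ℝ) (2 / ρ)) one_lt_two
  obtain ⟨hmM, hmρ⟩ := max_lt_iff.1 hm
  rw [div_lt_iff₀' hρ] at hmρ
  obtain ⟨W, -⟩ := exists_window_subset_closedBall hlip hexp hc₀ hc₁ hφ hsub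
    (by exact_mod_cast hmM.le) hmρ
  exact ⟨W⟩

section Chains

variable {W : ℕ → Window γ U K φ c M} {ζ : ℝ}

theorem strictMono_den_of_precedes (hW : ∀ n, (W n).Precedes (W (n + 1))) :
    StrictMono fun n => (W n).rat.den :=
  strictMono_nat_of_lt_succ fun n => (hW n).1

theorem mem_ratApproxSet_of_mem_windows (hW : ∀ n, (W n).Precedes (W (n + 1)))
    (hζ : ∀ n, ζ ∈ (W n).ball) : ζ ∈ ratApproxSet γ φ := by
  refine (strictMono_den_of_precedes hW).tendsto_atTop.frequently (Frequently.of_forall fun n => ?_)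
  exact ⟨(W n).rat, rfl, ((W n).dist_mem ζ (hζ n)).2⟩

theorem Window.dist_rat_le (hexp : AntilipschitzWith 1 γ) (W : Window γ U K φ c M)
    (hζ : ζ ∈ W.ball) : dist ζ W.rat ≤ φ W.rat.den := by
  simpa using (hexp.le_mul_dist ζ W.rat).trans (by simpa using (W.dist_mem ζ hζ).2)

/-- If `r ≠ W.rat`, these are at least `1 / (r.den * W.rat.den)` apart. The lower bound on `r.den`
makes `φ r.den` less than half of that, and the upper bound does the same for `φ W.rat.den`. -/
theorem Window.mul_rate_lt_dist (hexp : AntilipschitzWith 1 γ) (hc₀ : 0 ≤ c) (hc₁ : c < 1)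
    (hφ : IsSmallFrom φ (windowRatio K c) M) (W : Window γ U K φ c M) (hζ : ζ ∈ W.ball) {r : ℚ}
    (hr : M ≤ r.den) (hlow : W.rat.den < r.den ^ 2)
    (hupp : (2 * W.rat.den * φ W.rat.den) ^ 2 * (r.den : ℝ) ^ 2 ≤ 1) :
    c * φ r.den < dist (γ ζ) (γ r) := by
  by_contra! hle
  suffices h : r = W.rat from hle.not_gt (h ▸ (W.dist_mem ζ hζ).1)
  have hφr := hφ.rate_pos _ hr
  have hφW := hφ.rate_pos _ W.le_den
  have hlow' : (W.rat.den : ℝ) < (r.den : ℝ) ^ 2 := by exact_mod_cast hlow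
  have hζr : dist ζ r ≤ φ r.den :=
    calc dist ζ r ≤ dist (γ ζ) (γ r) := by simpa using hexp.le_mul_dist ζ r
      _ ≤ c * φ r.den := hle
      _ ≤ φ r.den := mul_le_of_le_one_left hφr.le hc₁.le
  apply eq_of_two_mul_den_mul_dist_lt_one (ζ := ζ)
  · calc 2 * (r.den * W.rat.den) * dist ζ r ≤ 2 * (r.den * W.rat.den) * φ r.den := by gcongr
      _ < 2 * (r.den * (r.den : ℝ) ^ 2) * φ r.den := by gcongr
      _ ≤ 48 * (r.den : ℝ) ^ 3 * φ r.den := by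
        rw [← pow_succ']
        gcongr
        norm_num
      _ ≤ 1 := (hφ.rate_le _ hr).trans (windowRatio_le_one hc₀)
  · calc 2 * (r.den * W.rat.den) * dist ζ W.rat ≤ 2 * (r.den * W.rat.den) * φ W.rat.den := by
          gcongr
          exact W.dist_rat_le hexp hζ
      _ ≤ 1 := (pow_le_one_iff_of_nonneg (by positivity) two_ne_zero).1
        (le_trans (le_of_eq (by ring)) hupp)

theorem notMem_ratApproxSet_of_mem_windows (hexp : AntilipschitzWith 1 γ) (hc₀ : 0 ≤ c)
    (hc₁ : c < 1) (hφ : IsSmallFrom φ (windowRatio K c) M)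
    (hW : ∀ n, (W n).Precedes (W (n + 1))) (hζ : ∀ n, ζ ∈ (W n).ball) :
    ζ ∉ ratApproxSet γ (fun b => c * φ b) := by
  refine not_frequently.2 ?_
  filter_upwards [eventually_ge_atTop M, eventually_gt_atTop (W 0).rat.den]
  rintro _ hM h0 ⟨r, rfl, hr⟩
  have hmono := strictMono_den_of_precedes hW
  obtain ⟨n, hlow, hupp⟩ := hmono.exists_between_of_tendsto_atTop hmono.tendsto_atTop
    (h0.trans_le (Nat.le_self_pow two_ne_zero r.den))
  refine hr.not_gt ((W n).mul_rate_lt_dist hexp hc₀ hc₁ hφ (hζ n) hM hlow ?_)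
  calc (2 * (W n).rat.den * φ (W n).rat.den) ^ 2 * (r.den : ℝ) ^ 2
      ≤ (2 * (W n).rat.den * φ (W n).rat.den) ^ 2 * (W (n + 1)).rat.den := by
        gcongr
        exact_mod_cast hupp
    _ ≤ 1 := (hW n).2

end Chains

theorem not_countable_ratApproxSet_diff (hlip : LipschitzOnWith K γ U)
    (hexp : AntilipschitzWith 1 γ) (hU : (interior U).Nonempty) (hc₀ : 0 ≤ c) (hc₁ : c < 1)
    (hpos : ∀ᶠ b in atTop, 0 < φ b)
    (hsmall : Tendsto (fun b : ℕ => (b : ℝ) ^ 3 * φ b) atTop (nhds 0)) :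
    ¬ ((ratApproxSet γ φ \ ratApproxSet γ (fun b => c * φ b)) ∩ U).Countable := by
  obtain ⟨M, hφ⟩ := exists_isSmallFrom (windowRatio_pos (K := K) hc₁) hpos hsmall
  have := nonempty_window hlip hexp hc₀ hc₁ hφ hU
  refine fun hcount => not_countable_of_refinement (I := Window.ball)
    (fun W => isCompact_closedBall _ _)
    (fun W => nonempty_closedBall.2 (mul_pos (windowRatio_pos hc₁) (hφ.rate_pos _ W.le_den)).le)
    (Window.exists_precedes_notMem hlip hexp hc₀ hc₁ hφ) (hcount.mono ?_)
  rintro ζ ⟨W, hW⟩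
  exact ⟨⟨mem_ratApproxSet_of_mem_windows (fun n => (hW n).1) fun n => (hW n).2,
    notMem_ratApproxSet_of_mem_windows hexp hc₀ hc₁ hφ (fun n => (hW n).1) fun n => (hW n).2⟩,
    (W 0).closedBall_subset (hW 0).2⟩

end Windows

/-! ### Simultaneous approximation of powers -/

theorem powRate_const_mul (k : ℕ) (c : ℝ) (Ψ : ℕ → ℝ) :
    powRate k (fun q => c * Ψ q) = fun b => c * powRate k Ψ b :=
  funext fun _ => mul_div_assoc _ _ _

theorem tendsto_pow_three_mul_powRate {k : ℕ} (hk : 2 ≤ k) {Ψ : ℕ → ℝ} {d : ℝ}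
    (hpos : ∀ q, 0 < Ψ q) (hΨ : ∀ᶠ q : ℕ in atTop, Ψ q < d / q) :
    Tendsto (fun b : ℕ => (b : ℝ) ^ 3 * powRate k Ψ b) atTop (nhds 0) := by
  have hd : Tendsto (fun b : ℕ => d / b) atTop (nhds 0) := tendsto_const_div_atTop_nhds_zero_nat d
  have hpow : ∀ᶠ b : ℕ in atTop, Ψ (b ^ k) < d / (b ^ k : ℕ) :=
    (tendsto_pow_atTop (by lia)).eventually hΨ
  refine squeeze_zero' (Eventually.of_forall fun b => ?_) ?_ hd
  · have := hpos (b ^ k)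
    unfold powRate
    positivity
  filter_upwards [hpow, eventually_gt_atTop 0] with b hb hb₀
  have hb₁ : (1 : ℝ) ≤ b := by exact_mod_cast hb₀
  have hΨb : Ψ (b ^ k) * (b : ℝ) ^ k ≤ d := by
    rw [Nat.cast_pow, lt_div_iff₀ (by positivity)] at hb
    exact hb.le
  have h4 : (b : ℝ) ^ 4 ≤ (b : ℝ) ^ k * (b : ℝ) ^ k := by
    rw [← pow_add]
    exact pow_le_pow_right₀ hb₁ (by lia)
  rw [powRate, mul_div_assoc', div_le_div_iff₀ (by positivity) (by positivity)]
  calc (b : ℝ) ^ 3 * Ψ (b ^ k) * b = b ^ 4 * Ψ (b ^ k) := by ring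
    _ ≤ b ^ k * b ^ k * Ψ (b ^ k) := by
      have := hpos (b ^ k)
      gcongr
    _ = Ψ (b ^ k) * b ^ k * b ^ k := by ring
    _ ≤ d * b ^ k := by gcongr

theorem powRate_pos {k : ℕ} {Ψ : ℕ → ℝ} (hpos : ∀ q, 0 < Ψ q) {b : ℕ} (hb : 0 < b) :
    0 < powRate k Ψ b :=
  div_pos (hpos _) (by positivity)

theorem irrational_of_not_isAlgebraic {ζ : ℝ} (h : ¬ IsAlgebraic ℤ ζ) : Irrational ζ :=
  Transcendental.irrational fun hℚ => h ((IsFractionRing.isAlgebraic_iff ℤ ℚ ℝ).2 hℚ)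

theorem mem_ratApproxSet_of_mem_Kk {k : ℕ} (hk : 0 < k) {Ψ : ℕ → ℝ} {α β C ζ : ℝ} (hα : 0 ≤ α)
    (hζ : Irrational ζ) (hζJ : ζ ∈ Ioo α β) (hC : (1 + sSup (Lk k '' Ioo α β)) * C ≤ 1)
    (hsmall : ∀ᶠ q : ℕ in atTop, Ψ q < C / q)
    (hΨ : ∀ l x : ℕ, 1 ≤ l → 1 ≤ x → Ψ (l * x) ≤ (l : ℝ) * Ψ x) (hKk : ζ ∈ Kk k Ψ) :
    ζ ∈ ratApproxSet (momentCurve k) (powRate k Ψ) := by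
  have hL : 0 ≤ sSup (Lk k '' Ioo α β) :=
    zero_le_one.trans (one_le_sSup_Lk hk hα (hζJ.1.trans hζJ.2))
  refine mem_ratApproxSet_of_frequently hk (Ioo_mem_nhds hζJ.1 hζJ.2) hζ
    (lipschitzOnWith_momentCurve hα) ?_ hΨ (mem_Kk_iff.1 hKk).2
  filter_upwards [hsmall, eventually_gt_atTop 0] with q hq hq₀
  rw [lt_div_iff₀' (by exact_mod_cast hq₀)] at hq
  rw [Real.coe_toNNReal _ hL]
  exact (mul_lt_mul_of_pos_left hq (by positivity)).trans_le hC

theorem powers_jarnik_second_general (k : ℕ) (hk : 2 ≤ k)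
    (α β : ℝ) (hα : 0 ≤ α) (hαβ : α < β) (d : ℝ) (c₀ : ℝ) (hc₀0 : 0 < c₀) (hc₀1 : c₀ < 1)
    (hd : (1 + sSup (Lk k '' Ioo α β)) * (c₀ * d) ≤ 1)
    (Ψ : ℕ → ℝ) (hpos : ∀ q, 0 < Ψ q) (hA2 : ∀ᶠ x : ℕ in atTop, Ψ x < d / (x : ℝ))
    (hB2 : ∀ l x : ℕ, 1 ≤ l → 1 ≤ x → Ψ (l * x) ≤ (l : ℝ) * Ψ x) :
    ¬ ((Kk k Ψ \ Kk k (fun x => c₀ * Ψ x)) ∩ Ioo α β).Countable := by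
  have hk₀ : 0 < k := by lia
  have hcurve := not_countable_ratApproxSet_diff (lipschitzOnWith_momentCurve (β := β) hα)
    (antilipschitzWith_momentCurve hk₀) (by rwa [interior_Ioo, nonempty_Ioo]) hc₀0.le hc₀1
    ((eventually_gt_atTop 0).mono fun b hb => powRate_pos hpos hb)
    (tendsto_pow_three_mul_powRate hk hpos hA2)
  rw [← powRate_const_mul] at hcurve
  have hA2' : ∀ᶠ x : ℕ in atTop, c₀ * Ψ x < c₀ * d / x := hA2.mono fun x hx => by
    rw [mul_div_assoc]
    gcongr
  have hB2' : ∀ l x : ℕ, 1 ≤ l → 1 ≤ x → c₀ * Ψ (l * x) ≤ l * (c₀ * Ψ x) := fun l x hl hx => by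
    rw [mul_left_comm]
    exact mul_le_mul_of_nonneg_left (hB2 l x hl hx) hc₀0.le
  refine fun hcount => hcurve ((hcount.union (Algebraic.countable ℤ ℝ)).mono ?_)
  rintro ζ ⟨⟨hζ, hζ'⟩, hζJ⟩
  by_cases hζalg : IsAlgebraic ℤ ζ
  · exact Or.inr hζalg
  exact Or.inl ⟨⟨mem_Kk_iff.2 ⟨fun P hP _ h0 => hζalg ⟨P, hP, h0⟩,
    frequently_of_mem_ratApproxSet hk₀ hζ⟩, fun hKk => hζ' (mem_ratApproxSet_of_mem_Kk hk₀ hα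
      (irrational_of_not_isAlgebraic hζalg) hζJ hd hA2' hB2' hKk)⟩, hζJ⟩

/-- Second assertion of the main theorem: for `k ≥ 2`, a bounded non-empty open interval
`J = (α, β) ⊆ (0, ∞)`, a constant `0 < d < 1/(2·sup_{t∈J} L_k(t))`, and positive `Ψ` with
`Ψ(x) < d/x` for large `x` and `Ψ(l·x) ≤ l·Ψ(x)`, for every fixed `0 < c₀ < 1` the set
`(𝒦_k(Ψ) \ 𝒦_k(c₀Ψ)) ∩ J` is uncountable. -/
theorem powers_jarnik_second (k : ℕ) (hk : 2 ≤ k)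
    (α β : ℝ) (hα : 0 ≤ α) (hαβ : α < β)
    (d : ℝ) (hd0 : 0 < d) (hd : d < 1 / (2 * sSup (Lk k '' Ioo α β)))
    (Ψ : ℕ → ℝ) (hpos : ∀ q, 0 < Ψ q)
    (hA2 : ∃ N : ℕ, ∀ x : ℕ, N ≤ x → Ψ x < d / (x : ℝ))
    (hB2 : ∀ l x : ℕ, 1 ≤ l → 1 ≤ x → Ψ (l * x) ≤ (l : ℝ) * Ψ x)
    (c₀ : ℝ) (hc₀0 : 0 < c₀) (hc₀1 : c₀ < 1) :
    ¬ ((Kk k Ψ \ Kk k (fun x => c₀ * Ψ x)) ∩ Ioo α β).Countable := by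
  have hL := one_le_sSup_Lk (show 0 < k by lia) hα hαβ
  rw [lt_div_iff₀ (by positivity)] at hd
  have hcd : c₀ * d ≤ d := mul_le_of_le_one_left hd0.le hc₀1.le
  exact powers_jarnik_second_general k hk α β hα hαβ d c₀ hc₀0 hc₀1 (by nlinarith [hcd]) Ψ hpos
    (eventually_atTop.2 hA2) hB2
end

section
/- Let k ≥ 1 be an integer, Ψ : (0,∞) → (0,∞) admissible of degree k (i.e. Ψ(x) = o(x^{−2k+1}) as x → ∞ and Ψ(x)/Ψ(y) ≥ (y/x)^{k−1} for all sufficiently large x ≤ y), and define Ψ_j(x) := Ψ(x^{1/j})·x^{(j−1)/j} for 1 ≤ j ≤ k. Then for every non-empty open interval I ⊆ (−1/2, 1/2), the set ⋂_{1≤j≤k} (𝒦_j(Ψ_j) \ ⋃_{0<c<1} 𝒦_j(cΨ_j)) ∩ I is uncountable. -/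
open Filter Set

/-- `psiJ Ψ j x = Ψ(x^{1/j}) · x^{(j-1)/j}`. -/
noncomputable def psiJ (Ψ : ℝ → ℝ) (j : ℕ) (x : ℝ) : ℝ :=
  Ψ (x ^ ((1 : ℝ) / (j : ℝ))) * x ^ (((j : ℝ) - 1) / (j : ℝ))

/-!
If `|q ζ - p| ≤ Ψ q` with `ζ` and `p / q` in `[-1/2, 1/2]`, where `x ↦ x ^ i` is `1`-Lipschitz, then
`q ^ j * ζ ^ i` is within `q ^ (j - 1) * Ψ q = Ψ_j (q ^ j)` of the integer `q ^ (j - i) * p ^ i`.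
Conversely, if `Q` approximates `ζ, …, ζ ^ j` simultaneously to order `Ψ_j Q`, then `Q * Ψ_j Q` is
so small that the numerators satisfy `P_{i+1} Q = P_i P_1` exactly; hence `P_1 / Q` in lowest terms
`p / q` has `q ^ j ∣ Q`, and `|q ζ - p| ≤ Ψ q`. For transcendental `ζ ∈ (-1/2, 1/2)` the conditions
for all `j` thus reduce to a single one: `ζ` is approximable to order `Ψ`, but not to order `c Ψ`
for any `c < 1`.

Such numbers are given by continued fractions whose partial quotients are `1 / (q Ψ q) + O(1)`. The
bounded freedom in every partial quotient suffices to escape any given countable set.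
-/

/-- `ζ` is approximable to order `ψ` if `|q ζ - p| ≤ ψ q` for some integer `p`, for infinitely many
denominators `q`. This is approximability of a single number, the case `k = 1` of `Kk` without its
irrationality condition. -/
def IsApproximable (ψ : ℕ → ℝ) (ζ : ℝ) : Prop :=
  ∃ᶠ q : ℕ in atTop, ∃ p : ℤ, |q * ζ - p| ≤ ψ q

/-! ### Sequences of convergents -/

/-- The convergents `num n / den n` of a continued fraction with partial quotients `quot n`,
recorded from some index on: the recursion starts from two fractions of determinant `±1` rather than
from the formal convergents `1 / 0` and `a₀ / 1`, so that all of them can be placed in a given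
interval. Partial quotients `1` are excluded, so `den (n + 2)` always exceeds
`den (n + 1) + den n`. -/
structure ConvergentSeq where
  num : ℕ → ℤ
  den : ℕ → ℕ
  quot : ℕ → ℕ
  den_zero_pos : 0 < den 0
  den_zero_lt_den_one : den 0 < den 1
  abs_det_zero : |num 1 * den 0 - num 0 * den 1| = 1
  two_le_quot : ∀ n, 2 ≤ quot n
  num_add_two : ∀ n, num (n + 2) = quot n * num (n + 1) + num n
  den_add_two : ∀ n, den (n + 2) = quot n * den (n + 1) + den n

lemma one_le_mul_abs_add_mul_abs {p P : ℤ} {q Q : ℕ} (h : P * q ≠ p * Q) (ζ : ℝ) :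
    1 ≤ Q * |q * ζ - p| + q * |Q * ζ - P| := by
  have hdet : (1 : ℝ) ≤ |(P * q - p * Q : ℝ)| := by
    exact_mod_cast Int.one_le_abs (sub_ne_zero.2 h)
  calc (1 : ℝ) ≤ |(P * q - p * Q : ℝ)| := hdet
    _ = |Q * (q * ζ - p) - q * (Q * ζ - P)| := by ring_nf
    _ ≤ |Q * (q * ζ - p)| + |q * (Q * ζ - P)| := abs_sub _ _
    _ = Q * |q * ζ - p| + q * |Q * ζ - P| := by simp only [abs_mul, Nat.abs_cast]

namespace ConvergentSeq

variable (s : ConvergentSeq)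

lemma den_pos_and_lt (n : ℕ) : 0 < s.den n ∧ s.den n < s.den (n + 1) := by
  induction n with
  | zero => exact ⟨s.den_zero_pos, s.den_zero_lt_den_one⟩
  | succ n ih =>
    have := s.den_add_two n
    have := s.two_le_quot n
    exact ⟨by omega, by nlinarith⟩

lemma den_pos (n : ℕ) : 0 < s.den n := (s.den_pos_and_lt n).1

lemma cast_den_pos (n : ℕ) : (0 : ℝ) < s.den n := Nat.cast_pos.2 (s.den_pos n)

lemma den_strictMono : StrictMono s.den :=
  strictMono_nat_of_lt_succ fun n => (s.den_pos_and_lt n).2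

lemma tendsto_den_atTop : Tendsto s.den atTop atTop := s.den_strictMono.tendsto_atTop

lemma den_add_den_lt (n : ℕ) : s.den (n + 1) + s.den n < s.den (n + 2) := by
  have := s.den_add_two n
  have := s.two_le_quot n
  have := s.den_pos (n + 1)
  nlinarith

lemma abs_det (n : ℕ) : |s.num (n + 1) * s.den n - s.num n * s.den (n + 1)| = 1 := by
  induction n with
  | zero => exact s.abs_det_zero
  | succ n ih =>
    rw [← ih, ← abs_neg, s.num_add_two, s.den_add_two]
    push_cast
    ring_nf

lemma isCoprime_den_num (n : ℕ) : IsCoprime (s.den n : ℤ) (s.num n) := by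
  rcases (abs_eq zero_le_one).1 (s.abs_det n) with h | h
  · exact ⟨s.num (n + 1), -s.den (n + 1), by linarith⟩
  · exact ⟨-s.num (n + 1), s.den (n + 1), by linarith⟩

/-- The `n`-th convergent as a real number. -/
noncomputable def conv (n : ℕ) : ℝ := s.num n / s.den n

lemma abs_conv_succ_sub_conv (n : ℕ) :
    |s.conv (n + 1) - s.conv n| = 1 / (s.den n * s.den (n + 1)) := by
  have h0 := s.cast_den_pos n
  have h1 := s.cast_den_pos (n + 1)
  have hdet : |(s.num (n + 1) * s.den n - s.num n * s.den (n + 1) : ℝ)| = 1 := by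
    exact_mod_cast s.abs_det n
  rw [conv, conv, div_sub_div _ _ h1.ne' h0.ne', mul_comm (s.den (n + 1) : ℝ) (s.num n : ℝ),
    abs_div, hdet, abs_of_pos (by positivity), mul_comm (s.den (n + 1) : ℝ)]

/-- `ζ` is the value of the continued fraction: it lies between any two consecutive convergents. -/
def IsValue (ζ : ℝ) : Prop := ∀ n, ζ ∈ uIcc (s.conv n) (s.conv (n + 1))

lemma conv_add_two_mem_uIcc (n : ℕ) : s.conv (n + 2) ∈ uIcc (s.conv n) (s.conv (n + 1)) := by
  have h0 := s.cast_den_pos n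
  have h1 := s.cast_den_pos (n + 1)
  have h2 := s.cast_den_pos (n + 2)
  have hden : (s.den (n + 2) : ℝ) = s.quot n * s.den (n + 1) + s.den n := by
    exact_mod_cast s.den_add_two n
  have hnum : (s.num (n + 2) : ℝ) = s.quot n * s.num (n + 1) + s.num n := by
    exact_mod_cast s.num_add_two n
  rw [← segment_eq_uIcc]
  refine ⟨s.den n / s.den (n + 2), s.quot n * s.den (n + 1) / s.den (n + 2), by positivity,
    by positivity, ?_, ?_⟩
  · rw [← add_div, div_eq_one_iff_eq h2.ne', hden, add_comm]
  · rw [conv, conv, conv, smul_eq_mul, smul_eq_mul, hnum]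
    field_simp
    ring

lemma exists_isValue : ∃ ζ, s.IsValue ζ := by
  obtain ⟨ζ, hζ⟩ := IsCompact.nonempty_iInter_of_sequence_nonempty_isCompact_isClosed
    (fun n => uIcc (s.conv n) (s.conv (n + 1)))
    (fun n => uIcc_subset_uIcc right_mem_uIcc (s.conv_add_two_mem_uIcc n))
    (fun _ => nonempty_uIcc) isCompact_uIcc (fun _ => isCompact_uIcc.isClosed)
  exact ⟨ζ, mem_iInter.1 hζ⟩

variable {s} {ζ : ℝ}

lemma IsValue.abs_den_mul_sub_num_le (h : s.IsValue ζ) (n : ℕ) :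
    |s.den n * ζ - s.num n| ≤ 1 / s.den (n + 1) := by
  have h0 := s.cast_den_pos n
  calc |s.den n * ζ - s.num n| = s.den n * |ζ - s.conv n| := by
        rw [← Nat.abs_cast (s.den n), ← abs_mul, Nat.abs_cast, conv]
        congr 1
        field_simp
    _ ≤ s.den n * |s.conv (n + 1) - s.conv n| := by
        gcongr ?_ * ?_
        exact abs_sub_left_of_mem_uIcc (h n)
    _ = 1 / s.den (n + 1) := by
        rw [abs_conv_succ_sub_conv]
        field_simp

lemma IsValue.one_sub_le_den_mul_abs (h : s.IsValue ζ) (n : ℕ) :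
    1 - s.den n / s.den (n + 2) ≤ s.den (n + 1) * |s.den n * ζ - s.num n| := by
  have hdet : s.num (n + 1) * s.den n ≠ s.num n * s.den (n + 1) := fun heq => by
    simpa [heq] using s.abs_det n
  have hone := one_le_mul_abs_add_mul_abs hdet ζ
  have hnext : s.den n * |s.den (n + 1) * ζ - s.num (n + 1)| ≤ s.den n / s.den (n + 2) := by
    rw [div_eq_mul_one_div]
    gcongr
    exact h.abs_den_mul_sub_num_le (n + 1)
  linarith

lemma IsValue.one_div_lt_abs (h : s.IsValue ζ) (n : ℕ) :
    1 / (s.den (n + 1) + s.den n : ℝ) < |s.den n * ζ - s.num n| := by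
  have h0 := s.cast_den_pos n
  have h1 := s.cast_den_pos (n + 1)
  have hlt : (s.den (n + 1) + s.den n : ℝ) < s.den (n + 2) := by exact_mod_cast s.den_add_den_lt n
  refine lt_of_mul_lt_mul_left ?_ h1.le
  calc s.den (n + 1) * (1 / (s.den (n + 1) + s.den n : ℝ))
      = 1 - s.den n / (s.den (n + 1) + s.den n) := by
        field_simp
        ring
    _ < 1 - s.den n / s.den (n + 2) := by gcongr
    _ ≤ s.den (n + 1) * |s.den n * ζ - s.num n| := h.one_sub_le_den_mul_abs n

/-- A fraction with denominator `Q` that is not a multiple of the `n`-th convergent has distance at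
least `1 / (Q * den n)` from it, and the convergent is closer than half of that to `ζ`. -/
lemma IsValue.abs_le_or_half_le (h : s.IsValue ζ) {n Q : ℕ} (hQ : Q ≠ 0)
    (hQn : 2 * Q ≤ s.den (n + 1)) (P : ℤ) :
    (s.den n ≤ Q ∧ |s.den n * ζ - s.num n| ≤ |Q * ζ - P|) ∨
      1 / 2 ≤ s.den n * |Q * ζ - P| := by
  by_cases hPQ : P * s.den n = s.num n * Q
  · obtain ⟨M, hM⟩ : s.den n ∣ Q := by
      exact_mod_cast (s.isCoprime_den_num n).dvd_of_dvd_mul_left (Dvd.intro_left P hPQ)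
    have hM1 : 1 ≤ M := Nat.one_le_iff_ne_zero.2 fun hM0 => hQ (by rw [hM, hM0, mul_zero])
    have hden : (s.den n : ℤ) ≠ 0 := by exact_mod_cast (s.den_pos n).ne'
    have hP : P = M * s.num n := mul_right_cancel₀ hden (by rw [hPQ, hM]; push_cast; ring)
    refine Or.inl ⟨hM ▸ Nat.le_mul_of_pos_right _ hM1, ?_⟩
    have hmul : Q * ζ - P = M * (s.den n * ζ - s.num n) := by
      rw [hP, hM]
      push_cast
      ring
    rw [hmul, abs_mul, Nat.abs_cast]
    exact le_mul_of_one_le_left (abs_nonneg _) (by exact_mod_cast hM1)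
  · right
    have hone := one_le_mul_abs_add_mul_abs hPQ ζ
    have hhalf : Q * |s.den n * ζ - s.num n| ≤ 1 / 2 :=
      calc Q * |s.den n * ζ - s.num n| ≤ Q * (1 / s.den (n + 1)) := by
            gcongr
            exact h.abs_den_mul_sub_num_le n
        _ ≤ 1 / 2 := by
            rw [mul_one_div, div_le_div_iff₀ (s.cast_den_pos _) two_pos]
            exact_mod_cast (by omega : Q * 2 ≤ 1 * s.den (n + 1))
    linarith

/-- The diagonal step: comparing `|q ζ - p|` with the threshold `1 / ((A + 1) q + q')` tells values
with partial quotient `A` from values with partial quotient `A + 1`; one of the two avoids `ζ`. -/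
lemma not_isValue_of_quot_eq_ite {n A : ℕ}
    (hA : s.quot n = if |s.den (n + 1) * ζ - s.num (n + 1)| ≤
      1 / ((A + 1) * s.den (n + 1) + s.den n) then A else A + 1) : ¬ s.IsValue ζ := by
  intro h
  have hden : (s.den (n + 2) : ℝ) = s.quot n * s.den (n + 1) + s.den n := by
    exact_mod_cast s.den_add_two n
  split_ifs at hA with hle
  · have hlt := h.one_div_lt_abs (n + 1)
    rw [hden, hA, show (A * s.den (n + 1) + s.den n + s.den (n + 1) : ℝ) =
      (A + 1) * s.den (n + 1) + s.den n by ring] at hlt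
    exact hlt.not_ge hle
  · have hup := h.abs_den_mul_sub_num_le (n + 1)
    rw [hden, hA, Nat.cast_add, Nat.cast_one] at hup
    exact hle hup

/-! ### Convergents adapted to an approximation function -/

/-- The convergents approximate their value to order exactly `ψ`: since `|q ζ - p|` is about
`1 / q'` for consecutive denominators `q`, `q'`, it is at most `ψ q` and asymptotic to it. -/
structure IsAdapted (s : ConvergentSeq) (ψ : ℕ → ℝ) : Prop where
  one_le : ∀ n, 1 ≤ s.den (n + 2) * ψ (s.den (n + 1))
  tendsto_one : Tendsto (fun n => s.den (n + 2) * ψ (s.den (n + 1))) atTop (nhds 1)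

variable {ψ : ℕ → ℝ}

lemma isAdapted_of_quot_bounds (hpos : ∀ q, 0 < q → 0 < ψ q)
    (hlim : Tendsto (fun q : ℕ => q * ψ q) atTop (nhds 0)) (C : ℝ)
    (hlow : ∀ n, 1 / (s.den (n + 1) * ψ (s.den (n + 1))) ≤ s.quot n)
    (hup : ∀ n, s.quot n ≤ 1 / (s.den (n + 1) * ψ (s.den (n + 1))) + C) : s.IsAdapted ψ := by
  have hψ : ∀ n, 0 < ψ (s.den (n + 1)) := fun n => hpos _ (s.den_pos _)
  have hmul : ∀ n, (s.den (n + 2) * ψ (s.den (n + 1)) : ℝ) =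
      s.quot n * (s.den (n + 1) * ψ (s.den (n + 1))) + s.den n * ψ (s.den (n + 1)) := by
    intro n
    rw [s.den_add_two]
    push_cast
    ring
  have hone : ∀ n, 1 ≤ s.den (n + 2) * ψ (s.den (n + 1)) := by
    intro n
    have hpos' := mul_pos (s.cast_den_pos (n + 1)) (hψ n)
    have := (div_le_iff₀ hpos').1 (hlow n)
    have := mul_pos (s.cast_den_pos n) (hψ n)
    linarith [hmul n]
  refine ⟨hone, tendsto_of_tendsto_of_tendsto_of_le_of_le tendsto_const_nhds
    (h := fun n => 1 + (C + 1) * (s.den (n + 1) * ψ (s.den (n + 1)))) ?_ hone fun n => ?_⟩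
  · have := ((hlim.comp (s.tendsto_den_atTop.comp (tendsto_add_atTop_nat 1))).const_mul
      (C + 1)).const_add 1
    rwa [mul_zero, add_zero] at this
  · have hpos' := mul_pos (s.cast_den_pos (n + 1)) (hψ n)
    have hquot := mul_le_mul_of_nonneg_right (hup n) hpos'.le
    rw [add_mul, one_div_mul_cancel hpos'.ne'] at hquot
    have hle : s.den n * ψ (s.den (n + 1)) ≤ s.den (n + 1) * ψ (s.den (n + 1)) :=
      mul_le_mul_of_nonneg_right (Nat.cast_le.2 (s.den_strictMono n.lt_succ_self).le) (hψ n).le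
    linarith [hmul n]

lemma IsAdapted.isApproximable (hs : s.IsAdapted ψ) (h : s.IsValue ζ) : IsApproximable ψ ζ := by
  refine (s.tendsto_den_atTop.comp (tendsto_add_atTop_nat 1)).frequently
    (Frequently.of_forall fun n => ⟨s.num (n + 1), ?_⟩)
  refine (h.abs_den_mul_sub_num_le (n + 1)).trans ?_
  rw [div_le_iff₀' (s.cast_den_pos _)]
  exact hs.one_le n

lemma IsAdapted.eventually_lt_abs (hs : s.IsAdapted ψ)
    (hlim : Tendsto (fun q : ℕ => q * ψ q) atTop (nhds 0)) (h : s.IsValue ζ) {c : ℝ} (hc : c < 1) :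
    ∀ᶠ n in atTop, c * ψ (s.den n) < |s.den n * ζ - s.num n| := by
  have hratio : ∀ n, (s.den (n + 1) / s.den (n + 3) : ℝ) ≤ s.den (n + 2) * ψ (s.den (n + 2)) := by
    intro n
    rw [div_le_iff₀ (s.cast_den_pos _)]
    calc (s.den (n + 1) : ℝ) ≤ s.den (n + 2) := Nat.cast_le.2 (s.den_strictMono (by omega)).le
      _ ≤ s.den (n + 2) * (s.den (n + 3) * ψ (s.den (n + 2))) :=
          le_mul_of_one_le_right (by positivity) (hs.one_le (n + 1))
      _ = s.den (n + 2) * ψ (s.den (n + 2)) * s.den (n + 3) := by ring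
  have hright : Tendsto (fun n => 1 - s.den (n + 2) * ψ (s.den (n + 2))) atTop (nhds 1) := by
    have := (hlim.comp (s.tendsto_den_atTop.comp (tendsto_add_atTop_nat 2))).const_sub 1
    rwa [sub_zero] at this
  rw [← map_add_atTop_eq_nat 1, eventually_map]
  filter_upwards [(hs.tendsto_one.const_mul c).eventually_lt hright (by rwa [mul_one])] with n hn
  refine lt_of_mul_lt_mul_left ?_ (s.cast_den_pos (n + 2)).le
  linarith [hratio n, h.one_sub_le_den_mul_abs (n + 1)]

lemma IsAdapted.not_isApproximable_const_mul (hs : s.IsAdapted ψ) (hpos : ∀ q, 0 < q → 0 < ψ q)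
    (hanti : ∃ N, AntitoneOn ψ (Ici N))
    (hlim : Tendsto (fun q : ℕ => q * ψ q) atTop (nhds 0)) (h : s.IsValue ζ) {c : ℝ}
    (hc0 : 0 ≤ c) (hc1 : c < 1) : ¬ IsApproximable (fun q => c * ψ q) ζ := by
  obtain ⟨N, hN⟩ := hanti
  obtain ⟨K, hK⟩ := eventually_atTop.1 ((hs.eventually_lt_abs hlim h hc1).and
    (s.tendsto_den_atTop.eventually_ge_atTop N))
  refine not_frequently.2 ?_
  filter_upwards [hlim.eventually_lt_const (show (0 : ℝ) < 1 / 4 by norm_num),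
    eventually_gt_atTop (s.den K), eventually_gt_atTop 0] with Q hQ4 hQK hQ0
  rintro ⟨P, hP⟩
  obtain ⟨n, hn, hn'⟩ := s.den_strictMono.exists_between_of_tendsto_atTop s.tendsto_den_atTop
    (show s.den 0 < 2 * Q by
      have := s.den_strictMono.monotone (Nat.zero_le K)
      omega)
  have hKn : K ≤ n := Nat.lt_succ_iff.1
    (s.den_strictMono.lt_iff_lt.1 (show s.den K < s.den (n + 1) by omega))
  obtain ⟨hbad, hNn⟩ := hK n hKn
  rcases h.abs_le_or_half_le hQ0.ne' hn' P with ⟨hle, habs⟩ | hhalf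
  · have hψ : c * ψ Q ≤ c * ψ (s.den n) :=
      mul_le_mul_of_nonneg_left (hN hNn (hNn.trans hle) hle) hc0
    linarith
  · have hψQ : 0 < ψ Q := hpos Q hQ0
    have hnQ : (s.den n : ℝ) ≤ 2 * Q := by exact_mod_cast hn.le
    have : s.den n * |Q * ζ - P| ≤ 2 * Q * ψ Q :=
      mul_le_mul hnQ (hP.trans (mul_le_of_le_one_left hψQ.le hc1.le)) (abs_nonneg _)
        (by positivity)
    linarith

/-! ### Existence of adapted convergents -/

lemma exists_quot_eq {p₀ p₁ : ℤ} {q₀ q₁ : ℕ} (hq₀ : 0 < q₀) (hq : q₀ < q₁)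
    (hdet : |p₁ * q₀ - p₀ * q₁| = 1) (g : ℕ → ℤ → ℕ → ℕ → ℕ) (hg : ∀ n p q q', 2 ≤ g n p q q') :
    ∃ s : ConvergentSeq, s.conv 0 = p₀ / q₀ ∧ s.conv 1 = p₁ / q₁ ∧
      ∀ n, s.quot n = g n (s.num (n + 1)) (s.den (n + 1)) (s.den n) := by
  let t : ℕ → (ℤ × ℕ) × (ℤ × ℕ) := fun n => Nat.rec ((p₀, q₀), (p₁, q₁))
    (fun n x => (x.2, g n x.2.1 x.2.2 x.1.2 * x.2.1 + x.1.1,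
      g n x.2.1 x.2.2 x.1.2 * x.2.2 + x.1.2)) n
  exact ⟨{ num := fun n => (t n).1.1
           den := fun n => (t n).1.2
           quot := fun n => g n (t (n + 1)).1.1 (t (n + 1)).1.2 (t n).1.2
           den_zero_pos := hq₀
           den_zero_lt_den_one := hq
           abs_det_zero := hdet
           two_le_quot := fun _ => hg _ _ _ _
           num_add_two := fun _ => rfl
           den_add_two := fun _ => rfl }, rfl, rfl, fun _ => rfl⟩

end ConvergentSeq

lemma exists_mul_sub_mul_eq_one {p : ℤ} {q : ℕ} (hq : 0 < q) (h : IsCoprime p q) (N : ℕ) :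
    ∃ (p' : ℤ) (q' : ℕ), N < q' ∧ p' * q - p * q' = 1 := by
  obtain ⟨u, v, huv⟩ := h
  have hlarge : (N : ℤ) < -u + (|u| + N + 1) * q := by
    have := le_abs_self u
    have := abs_nonneg u
    have : (1 : ℤ) ≤ q := by exact_mod_cast hq
    nlinarith
  lift -u + (|u| + N + 1) * q to ℕ using by omega with q' hq'
  refine ⟨v + (|u| + N + 1) * p, q', by exact_mod_cast hlarge, ?_⟩
  rw [hq']
  linear_combination huv

lemma exists_div_mem_Ioo_abs_det_eq_one {a b : ℝ} (hab : a < b) :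
    ∃ (p₀ p₁ : ℤ) (q₀ q₁ : ℕ), 0 < q₀ ∧ q₀ < q₁ ∧ |p₁ * q₀ - p₀ * q₁| = 1 ∧
      (p₀ / q₀ : ℝ) ∈ Ioo a b ∧ (p₁ / q₁ : ℝ) ∈ Ioo a b := by
  obtain ⟨r, har, hrb⟩ := exists_rat_btwn hab
  obtain ⟨T, hT⟩ := exists_nat_one_div_lt (sub_pos.2 hrb)
  obtain ⟨p, q, hq, hdet⟩ := exists_mul_sub_mul_eq_one r.den_pos
    (Int.isCoprime_iff_gcd_eq_one.2 r.reduced) (max r.den (T + 1))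
  obtain ⟨hrq, hTq⟩ := max_lt_iff.1 hq
  have hden : (1 : ℝ) ≤ r.den := by exact_mod_cast r.den_pos
  have hTq' : (T + 1 : ℝ) ≤ q := by exact_mod_cast hTq.le
  have hq0 : (0 : ℝ) < q := by linarith [Nat.cast_nonneg (α := ℝ) T]
  have hdetR : (p * r.den - r.num * q : ℝ) = 1 := by exact_mod_cast hdet
  have hsub : (p / q : ℝ) - r = 1 / (q * r.den) := by
    rw [Rat.cast_def, div_sub_div _ _ hq0.ne' (by positivity), mul_comm (q : ℝ) r.num, hdetR]
  have hsmall : 1 / (q * r.den : ℝ) ≤ 1 / (T + 1) :=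
    one_div_le_one_div_of_le (by positivity) (by nlinarith)
  have hsub_pos : 0 < 1 / (q * r.den : ℝ) := by positivity
  refine ⟨r.num, p, r.den, q, r.den_pos, hrq, by rw [hdet, abs_one], ?_, ?_, ?_⟩
  · rw [← Rat.cast_def]
    exact ⟨har, hrb⟩
  · linarith
  · linarith

lemma ConvergentSeq.exists_isAdapted_not_isValue {ψ : ℕ → ℝ} (hpos : ∀ q, 0 < q → 0 < ψ q)
    (hlim : Tendsto (fun q : ℕ => q * ψ q) atTop (nhds 0)) {a b : ℝ} (hab : a < b) (f : ℕ → ℝ) :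
    ∃ s : ConvergentSeq, s.conv 0 ∈ Ioo a b ∧ s.conv 1 ∈ Ioo a b ∧ s.IsAdapted ψ ∧
      ∀ n, ¬ s.IsValue (f n) := by
  obtain ⟨p₀, p₁, q₀, q₁, hq₀, hq, hdet, h₀, h₁⟩ := exists_div_mem_Ioo_abs_det_eq_one hab
  let A : ℕ → ℕ := fun q => ⌈1 / (q * ψ q)⌉₊ + 2
  obtain ⟨s, hs₀, hs₁, hs⟩ := exists_quot_eq hq₀ hq hdet
    (fun n p q q' => if |q * f n - p| ≤ 1 / ((A q + 1) * q + q') then A q else A q + 1)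
    (fun n p q q' => by split_ifs <;> simp only [A] <;> omega)
  have hA : ∀ n, A (s.den (n + 1)) ≤ s.quot n ∧ s.quot n ≤ A (s.den (n + 1)) + 1 := by
    intro n
    rw [hs n]
    split_ifs <;> omega
  refine ⟨s, hs₀ ▸ h₀, hs₁ ▸ h₁, isAdapted_of_quot_bounds hpos hlim 4 (fun n => ?_) fun n => ?_,
    fun n => not_isValue_of_quot_eq_ite (hs n)⟩
  · exact (Nat.le_ceil _).trans (by exact_mod_cast (Nat.le_add_right _ 2).trans (hA n).1)
  · have hceil := Nat.ceil_lt_add_one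
      (one_div_nonneg.2 (mul_pos (s.cast_den_pos (n + 1)) (hpos _ (s.den_pos (n + 1)))).le)
    have hquot : (s.quot n : ℝ) ≤ A (s.den (n + 1)) + 1 := by exact_mod_cast (hA n).2
    simp only [A, Nat.cast_add, Nat.cast_ofNat] at hquot
    linarith

/-- `ζ` is approximable to order `ψ`, but not to order `c ψ` for any `c < 1`. -/
def IsExactlyApproximable (ψ : ℕ → ℝ) (ζ : ℝ) : Prop :=
  IsApproximable ψ ζ ∧ ∀ c ∈ Ioo (0 : ℝ) 1, ¬ IsApproximable (fun q => c * ψ q) ζ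

theorem not_countable_isExactlyApproximable {ψ : ℕ → ℝ} (hpos : ∀ q, 0 < q → 0 < ψ q)
    (hanti : ∃ N, AntitoneOn ψ (Ici N)) (hlim : Tendsto (fun q : ℕ => q * ψ q) atTop (nhds 0))
    {a b : ℝ} (hab : a < b) : ¬ {ζ ∈ Ioo a b | IsExactlyApproximable ψ ζ}.Countable := by
  intro hcount
  obtain ⟨f, hf⟩ := countable_iff_exists_subset_range.1 hcount
  obtain ⟨s, h₀, h₁, hs, hfs⟩ := ConvergentSeq.exists_isAdapted_not_isValue hpos hlim hab f
  obtain ⟨ζ, hζ⟩ := s.exists_isValue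
  have hmem : ζ ∈ Ioo a b := ordConnected_Ioo.uIcc_subset h₀ h₁ (hζ 0)
  obtain ⟨n, rfl⟩ := hf ⟨hmem, hs.isApproximable hζ,
    fun c hc => hs.not_isApproximable_const_mul hpos hanti hlim hζ hc.1.le hc.2⟩
  exact hfs n hζ

/-! ### Membership in `Kk` for transcendental numbers -/

lemma finite_setOf_abs_sub_intCast_le_s7 (x r : ℝ) : {m : ℤ | |x - m| ≤ r}.Finite := by
  refine (finite_Icc ⌈x - r⌉ ⌊x + r⌋).subset fun m hm => ?_
  have := abs_le.1 (mem_ofPred.1 hm)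
  exact ⟨Int.ceil_le.2 (by linarith), Int.le_floor.2 (by linarith)⟩

lemma mem_Kk_iff_frequently {k : ℕ} {ψ : ℕ → ℝ} {ζ : ℝ} (hζ : Transcendental ℤ ζ) :
    ζ ∈ Kk k ψ ↔ ∃ᶠ q : ℕ in atTop, ∃ p : Fin k → ℤ,
      ∀ j : Fin k, |(q : ℝ) * ζ ^ ((j : ℕ) + 1) - p j| ≤ ψ q := by
  have hdeg : ∀ P : Polynomial ℤ, P ≠ 0 → P.natDegree ≤ k → Polynomial.aeval ζ P ≠ 0 :=
    fun P hP _ h0 => hζ ⟨P, hP, h0⟩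
  refine (and_iff_right hdeg).trans ⟨fun hinf => ?_, fun hfreq => ?_⟩
  · refine Nat.frequently_atTop_iff_infinite.2 fun hfin => hinf ?_
    refine Finite.of_finite_fibers Prod.fst (hfin.subset ?_) fun q _ => ?_
    · rintro _ ⟨⟨q, p⟩, ⟨-, hp⟩, rfl⟩
      exact ⟨p, hp⟩
    · have hbox : {p : Fin k → ℤ |
          ∀ j : Fin k, |(q : ℝ) * ζ ^ ((j : ℕ) + 1) - p j| ≤ ψ q}.Finite :=
        Finite.pi' fun _ => finite_setOf_abs_sub_intCast_le_s7 _ _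
      refine (hbox.image (Prod.mk q)).subset ?_
      rintro ⟨_, p⟩ ⟨⟨-, hp⟩, rfl⟩
      exact ⟨p, hp, rfl⟩
  · refine Infinite.of_image Prod.fst ((Nat.frequently_atTop_iff_infinite.1
      (hfreq.and_eventually (eventually_ge_atTop 1))).mono ?_)
    rintro q ⟨⟨p, hp⟩, hq⟩
    exact ⟨(q, p), ⟨hq, hp⟩, rfl⟩

/-! ### The functions `Ψ_j` -/

lemma psiJ_const_mul (c : ℝ) (Ψ : ℝ → ℝ) (j : ℕ) (x : ℝ) :
    psiJ (fun y => c * Ψ y) j x = c * psiJ Ψ j x :=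
  mul_assoc _ _ _

lemma psiJ_pow (Ψ : ℝ → ℝ) {j : ℕ} (hj : j ≠ 0) {x : ℝ} (hx : 0 ≤ x) :
    psiJ Ψ j (x ^ j) = Ψ x * x ^ (j - 1) := by
  have hroot : (x ^ j) ^ ((1 : ℝ) / j) = x := by
    rw [one_div, Real.pow_rpow_inv_natCast hx hj]
  have hexp : ((j : ℝ) - 1) / j = 1 / j * ((j - 1 : ℕ) : ℝ) := by
    rw [Nat.cast_pred (Nat.pos_of_ne_zero hj)]
    ring
  rw [psiJ, hroot, hexp, Real.rpow_mul (pow_nonneg hx j), hroot, Real.rpow_natCast]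

lemma tendsto_mul_psiJ_atTop {Ψ : ℝ → ℝ} {j : ℕ} (hj : j ≠ 0)
    (hΨ : Tendsto (fun x : ℝ => x ^ (2 * j - 1) * Ψ x) atTop (nhds 0)) :
    Tendsto (fun x : ℝ => x * psiJ Ψ j x) atTop (nhds 0) := by
  have hroot : Tendsto (fun x : ℝ => x ^ ((j : ℝ)⁻¹)) atTop atTop :=
    tendsto_rpow_atTop (by positivity)
  have hpow : ∀ y : ℝ, 0 ≤ y → y ^ (2 * j - 1) * Ψ y = y ^ j * psiJ Ψ j (y ^ j) := by
    intro y hy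
    rw [psiJ_pow Ψ hj hy, show 2 * j - 1 = j + (j - 1) by omega, pow_add]
    ring
  refine (hΨ.comp hroot).congr' ?_
  filter_upwards [eventually_ge_atTop 0] with x hx
  rw [Function.comp_apply, hpow _ (Real.rpow_nonneg hx _), Real.rpow_inv_natCast_pow hx hj]

/-! ### From approximations of `ζ` to approximations of its powers, and back -/

lemma abs_pow_sub_pow_le_abs_sub {x y : ℝ} (hx : |x| ≤ 1 / 2) (hy : |y| ≤ 1 / 2) (n : ℕ) :
    |x ^ n - y ^ n| ≤ |x - y| := by
  rcases n.eq_zero_or_pos with rfl | hn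
  · simp
  have hn2 : (n : ℝ) ≤ 2 ^ (n - 1) := by
    have := Nat.lt_two_pow_self (n := n - 1)
    exact_mod_cast (by omega : n ≤ 2 ^ (n - 1))
  calc |x ^ n - y ^ n| ≤ |x - y| * n * max |x| |y| ^ (n - 1) := abs_pow_sub_pow_le x y n
    _ ≤ |x - y| * 2 ^ (n - 1) * (1 / 2) ^ (n - 1) := by
        gcongr
        exact max_le hx hy
    _ = |x - y| := by rw [mul_assoc, ← mul_pow]; norm_num

lemma abs_pow_mul_sub_le {ζ : ℝ} {q : ℕ} {p : ℤ} (hζ : |ζ| ≤ 1 / 2)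
    (hpq : |(p / q : ℝ)| ≤ 1 / 2) (hq : q ≠ 0) {i j : ℕ} (hij : i ≤ j) (hj : j ≠ 0) :
    |(q : ℝ) ^ j * ζ ^ i - q ^ (j - i) * p ^ i| ≤ |q * ζ - p| * q ^ (j - 1) := by
  have hqR : (0 : ℝ) < q := by positivity
  have hfac : (q : ℝ) ^ j * ζ ^ i - q ^ (j - i) * p ^ i = q ^ j * (ζ ^ i - (p / q) ^ i) := by
    rw [mul_sub, div_pow, ← pow_sub_mul_pow (q : ℝ) hij]
    field_simp
  calc |(q : ℝ) ^ j * ζ ^ i - q ^ (j - i) * p ^ i| = q ^ j * |ζ ^ i - (p / q) ^ i| := by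
        rw [hfac, abs_mul, abs_of_pos (by positivity)]
    _ ≤ q ^ j * |ζ - p / q| :=
        mul_le_mul_of_nonneg_left (abs_pow_sub_pow_le_abs_sub hζ hpq i) (by positivity)
    _ = |q * ζ - p| * q ^ (j - 1) := by
        rw [← mul_pow_sub_one hj, show (q : ℝ) * ζ - p = q * (ζ - p / q) by field_simp, abs_mul,
          abs_of_pos hqR]
        ring

/-- The difference of the two sides is an integer of size `O(ε Q)`. -/
lemma mul_eq_mul_of_abs_mul_pow_sub_le {ζ ε : ℝ} {Q : ℕ} {i : ℕ} {u v w : ℤ} (hζ : |ζ| ≤ 1)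
    (hQ : Q ≠ 0) (hε : 4 * (Q * ε) < 1) (hu : |Q * ζ - u| ≤ ε) (hv : |Q * ζ ^ i - v| ≤ ε)
    (hw : |Q * ζ ^ (i + 1) - w| ≤ ε) : w * Q = v * u := by
  have hQ1 : (1 : ℝ) ≤ Q := by exact_mod_cast Nat.one_le_iff_ne_zero.2 hQ
  have hε0 : 0 ≤ ε := (abs_nonneg _).trans hu
  have hεQ : ε ≤ Q * ε := le_mul_of_one_le_left hε0 hQ1
  have hζi : |ζ ^ i| ≤ 1 := by
    rw [abs_pow]
    exact pow_le_one₀ (abs_nonneg ζ) hζ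
  have hlt : |((w * Q - v * u : ℤ) : ℝ)| < 1 := by
    set e₁ := Q * ζ - u
    set eᵢ := Q * ζ ^ i - v
    set e := Q * ζ ^ (i + 1) - w
    calc |((w * Q - v * u : ℤ) : ℝ)| = |Q * ζ * eᵢ + Q * ζ ^ i * e₁ - eᵢ * e₁ - Q * e| := by
          push_cast
          congr 1
          simp only [e₁, eᵢ, e]
          ring
      _ ≤ |Q * ζ * eᵢ| + |Q * ζ ^ i * e₁| + |eᵢ * e₁| + |Q * e| :=
          (abs_sub _ _).trans (add_le_add_left ((abs_sub _ _).trans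
            (add_le_add_left (abs_add_le _ _) _)) _)
      _ ≤ Q * 1 * ε + Q * 1 * ε + 1 * ε + Q * ε := by
          simp only [abs_mul, Nat.abs_cast]
          gcongr
          linarith
      _ < 1 := by linarith
  exact sub_eq_zero.1 (Int.abs_lt_one_iff.1 (by exact_mod_cast hlt))

lemma den_pow_dvd_of_abs_mul_pow_sub_le {ζ ε : ℝ} {Q j : ℕ} {P : Fin j → ℤ} (hj : 0 < j)
    (hζ : |ζ| ≤ 1) (hQ : Q ≠ 0) (hε : 4 * (Q * ε) < 1)
    (hP : ∀ i : Fin j, |Q * ζ ^ ((i : ℕ) + 1) - P i| ≤ ε) :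
    (P ⟨0, hj⟩ / Q : ℚ).den ^ j ∣ Q := by
  have hQ' : (Q : ℚ) ≠ 0 := by exact_mod_cast hQ
  have hpow : ∀ i (hi : i < j), (P ⟨0, hj⟩ / Q : ℚ) ^ (i + 1) = P ⟨i, hi⟩ / Q := by
    intro i
    induction i with
    | zero => simp
    | succ i ih =>
      intro hi
      have hmul : (P ⟨i + 1, hi⟩ * Q : ℚ) = P ⟨i, by omega⟩ * P ⟨0, hj⟩ := by
        exact_mod_cast mul_eq_mul_of_abs_mul_pow_sub_le hζ hQ hε (by simpa using hP ⟨0, hj⟩)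
          (hP ⟨i, by omega⟩) (hP ⟨i + 1, hi⟩)
      rw [pow_succ, ih (by omega), div_mul_div_comm, ← hmul, mul_div_mul_right _ _ hQ']
  have hlast := hpow (j - 1) (by omega)
  rw [Nat.sub_add_cancel hj] at hlast
  rw [← Rat.den_pow, hlast]
  have := Rat.den_dvd (P ⟨j - 1, by omega⟩) Q
  rw [Rat.divInt_eq_div, Int.cast_natCast] at this
  exact_mod_cast this

lemma abs_den_mul_sub_num_le {Ψ : ℝ → ℝ} {X : ℝ} (hΨ : AntitoneOn Ψ (Ici X)) {j Q : ℕ}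
    (hj : j ≠ 0) (hQ : Q ≠ 0) {ζ : ℝ} {r : ℚ} (hdvd : r.den ^ j ∣ Q) (hX : X ≤ r.den)
    (hr : Q * |ζ - r| ≤ psiJ Ψ j Q) : |r.den * ζ - r.num| ≤ Ψ r.den := by
  obtain ⟨y, hy0, hyQ⟩ : ∃ y : ℝ, 0 ≤ y ∧ y ^ j = Q :=
    ⟨(Q : ℝ) ^ ((j : ℝ)⁻¹), by positivity, Real.rpow_inv_natCast_pow (by positivity) hj⟩
  have hden_le : (r.den : ℝ) ≤ y := by
    rw [← pow_le_pow_iff_left₀ (by positivity) hy0 hj, hyQ]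
    exact_mod_cast Nat.le_of_dvd (Nat.pos_of_ne_zero hQ) hdvd
  have hy : 0 < y := (Nat.cast_pos.2 r.den_pos).trans_le hden_le
  rw [← hyQ, psiJ_pow Ψ hj hy0, ← mul_pow_sub_one hj, mul_right_comm] at hr
  calc |r.den * ζ - r.num| = r.den * |ζ - r| := by
        rw [← Nat.abs_cast r.den, ← abs_mul, Nat.abs_cast, mul_sub]
        congr 2
        exact_mod_cast r.den_mul_eq_num.symm
    _ ≤ y * |ζ - r| := by gcongr
    _ ≤ Ψ y := le_of_mul_le_mul_right hr (by positivity)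
    _ ≤ Ψ r.den := hΨ hX (hX.trans hden_le) hden_le

lemma frequently_isApproximable_powers {Ψ : ℝ → ℝ} {j : ℕ} (hj : j ≠ 0)
    (hΨ : Tendsto (fun x : ℝ => x ^ (2 * j - 1) * Ψ x) atTop (nhds 0)) {ζ : ℝ} (hζ : |ζ| < 1 / 2)
    (h : IsApproximable (fun q => Ψ q) ζ) :
    ∃ᶠ Q : ℕ in atTop, ∃ P : Fin j → ℤ,
      ∀ i : Fin j, |(Q : ℝ) * ζ ^ ((i : ℕ) + 1) - P i| ≤ psiJ Ψ j Q := by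
  have hsmall : ∀ᶠ q : ℕ in atTop, (q : ℝ) ^ (2 * j - 1) * Ψ q < 1 / 2 - |ζ| :=
    (hΨ.comp tendsto_natCast_atTop_atTop).eventually_lt_const (by linarith)
  refine (tendsto_pow_atTop hj).frequently
    ((h.and_eventually (hsmall.and (eventually_gt_atTop 0))).mono ?_)
  rintro q ⟨⟨p, hp⟩, hq, hq0⟩
  have hqR : (1 : ℝ) ≤ q := by exact_mod_cast hq0
  have hΨq : 0 ≤ Ψ q := (abs_nonneg _).trans hp
  have hdist : |ζ - p / q| ≤ (q : ℝ) ^ (2 * j - 1) * Ψ q :=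
    calc |ζ - p / q| = |q * ζ - p| / q := by
          rw [← Nat.abs_cast q, ← abs_div, Nat.abs_cast]
          congr 1
          field_simp
      _ ≤ |q * ζ - p| := div_le_self (abs_nonneg _) hqR
      _ ≤ Ψ q := hp
      _ ≤ (q : ℝ) ^ (2 * j - 1) * Ψ q := le_mul_of_one_le_left hΨq (one_le_pow₀ hqR)
  have hpq : |(p / q : ℝ)| ≤ 1 / 2 := by
    have := abs_sub_abs_le_abs_sub (p / q : ℝ) ζ
    rw [abs_sub_comm] at this
    linarith
  refine ⟨fun i => q ^ (j - (i + 1)) * p ^ ((i : ℕ) + 1), fun i => ?_⟩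
  push_cast
  rw [psiJ_pow Ψ hj (by positivity)]
  exact (abs_pow_mul_sub_le hζ.le hpq hq0.ne' i.isLt hj).trans (by gcongr)

lemma exists_pos_forall_le_abs_sub_of_den_le {ζ : ℝ} (hζ : Irrational ζ) (N : ℕ) :
    ∃ δ > 0, ∀ r : ℚ, r.den ≤ N → δ ≤ |ζ - r| := by
  obtain ⟨δ, hfar, hδ⟩ :=
    (((hζ.eventually_forall_le_dist_cast_rat_of_den_le N).filter_mono nhdsWithin_le_nhds).and
      (self_mem_nhdsWithin (s := Ioi 0))).exists
  exact ⟨δ, hδ, hfar⟩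

/-- The simultaneous approximations force `Q` to be divisible by the `j`-th power of the denominator
of `P₁ / Q`; that fraction, in lowest terms, is then an approximation of the required quality. -/
lemma isApproximable_of_frequently_powers {Ψ : ℝ → ℝ} {j : ℕ} (hj : j ≠ 0)
    (hΨ : Tendsto (fun x : ℝ => x ^ (2 * j - 1) * Ψ x) atTop (nhds 0))
    (hanti : ∃ X, AntitoneOn Ψ (Ici X)) {ζ : ℝ} (hζ : |ζ| ≤ 1) (hirr : Irrational ζ)
    (h : ∃ᶠ Q : ℕ in atTop, ∃ P : Fin j → ℤ,
      ∀ i : Fin j, |(Q : ℝ) * ζ ^ ((i : ℕ) + 1) - P i| ≤ psiJ Ψ j Q) :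
    IsApproximable (fun q => Ψ q) ζ := by
  obtain ⟨X, hX⟩ := hanti
  refine frequently_atTop.2 fun N => ?_
  obtain ⟨δ, hδ, hfar⟩ := exists_pos_forall_le_abs_sub_of_den_le hirr (max N ⌈X⌉₊)
  have hsmall : ∀ᶠ Q : ℕ in atTop, (Q : ℝ) * psiJ Ψ j Q < min δ (1 / 4) :=
    ((tendsto_mul_psiJ_atTop hj hΨ).comp tendsto_natCast_atTop_atTop).eventually_lt_const
      (by positivity)
  obtain ⟨Q, ⟨P, hP⟩, hQ, hQ0⟩ :=
    (h.and_eventually (hsmall.and (eventually_gt_atTop 0))).exists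
  obtain ⟨hQδ, hQ4⟩ := lt_min_iff.1 hQ
  have hj0 : 0 < j := Nat.pos_of_ne_zero hj
  have hQ1 : (1 : ℝ) ≤ Q := by exact_mod_cast hQ0
  set r : ℚ := P ⟨0, hj0⟩ / Q with hr_def
  have hr : Q * |ζ - r| ≤ psiJ Ψ j Q := by
    have hfirst := hP ⟨0, hj0⟩
    rwa [zero_add, pow_one, show (Q : ℝ) * ζ - P ⟨0, hj0⟩ = Q * (ζ - r) by
      rw [hr_def]; push_cast; field_simp, abs_mul, Nat.abs_cast] at hfirst
  have hbig : max N ⌈X⌉₊ < r.den := by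
    by_contra! hle
    have hδr := hfar r hle
    have h1 : |ζ - r| ≤ Q * |ζ - r| := le_mul_of_one_le_left (abs_nonneg _) hQ1
    have h2 : Q * |ζ - r| ≤ Q * (Q * |ζ - r|) := le_mul_of_one_le_left (by positivity) hQ1
    have h3 : Q * (Q * |ζ - r|) ≤ Q * psiJ Ψ j Q := by gcongr
    linarith
  have hdvd : r.den ^ j ∣ Q :=
    den_pow_dvd_of_abs_mul_pow_sub_le hj0 hζ hQ0.ne' (by linarith) hP
  have hXr : X ≤ r.den := (Nat.le_ceil X).trans (by exact_mod_cast (le_max_right _ _).trans hbig.le)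
  exact ⟨r.den, (le_max_left _ _).trans hbig.le, r.num,
    abs_den_mul_sub_num_le hX hj hQ0.ne' hdvd hXr hr⟩

lemma mem_Kk_psiJ_iff_isApproximable {Ψ : ℝ → ℝ} {j : ℕ} (hj : j ≠ 0)
    (hΨ : Tendsto (fun x : ℝ => x ^ (2 * j - 1) * Ψ x) atTop (nhds 0))
    (hanti : ∃ X, AntitoneOn Ψ (Ici X)) {ζ : ℝ} (hζ : |ζ| < 1 / 2) (htr : Transcendental ℤ ζ) :
    ζ ∈ Kk j (fun q => psiJ Ψ j q) ↔ IsApproximable (fun q => Ψ q) ζ := by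
  have hirr : Irrational ζ :=
    Transcendental.irrational fun h => htr ((IsFractionRing.isAlgebraic_iff ℤ ℚ ℝ).2 h)
  rw [mem_Kk_iff_frequently htr]
  exact ⟨isApproximable_of_frequently_powers hj hΨ hanti (by linarith) hirr,
    frequently_isApproximable_powers hj hΨ hζ⟩

/-! ### Intersecting over the degrees -/

lemma tendsto_pow_mul_atTop_of_le {f : ℝ → ℝ} {m n : ℕ} (hmn : m ≤ n)
    (h : Tendsto (fun x => x ^ n * f x) atTop (nhds 0)) :
    Tendsto (fun x => x ^ m * f x) atTop (nhds 0) := by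
  refine squeeze_zero_norm' ?_ (tendsto_zero_iff_norm_tendsto_zero.1 h)
  filter_upwards [eventually_ge_atTop 1] with x hx
  rw [norm_mul, norm_mul, norm_pow, norm_pow, Real.norm_of_nonneg (zero_le_one.trans hx)]
  gcongr

lemma mem_Kk_psiJ_diff_iff_isExactlyApproximable {Ψ : ℝ → ℝ} {j : ℕ} (hj : j ≠ 0)
    (hΨ : Tendsto (fun x : ℝ => x ^ (2 * j - 1) * Ψ x) atTop (nhds 0))
    (hanti : ∃ X, AntitoneOn Ψ (Ici X)) {ζ : ℝ} (hζ : |ζ| < 1 / 2) (htr : Transcendental ℤ ζ) :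
    ζ ∈ Kk j (fun q : ℕ => psiJ Ψ j q) \
        ⋃ c ∈ Ioo (0 : ℝ) 1, Kk j (fun q : ℕ => c * psiJ Ψ j q) ↔
      IsExactlyApproximable (fun q => Ψ q) ζ := by
  have hscaled : ∀ c ∈ Ioo (0 : ℝ) 1, (ζ ∈ Kk j (fun q : ℕ => c * psiJ Ψ j q) ↔
      IsApproximable (fun q => c * Ψ q) ζ) := by
    intro c hc
    simp only [← psiJ_const_mul]
    refine mem_Kk_psiJ_iff_isApproximable hj ?_
      (hanti.imp fun X hX x hx y hy hxy =>
      mul_le_mul_of_nonneg_left (hX hx hy hxy) hc.1.le) hζ htr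
    simpa only [mul_zero, mul_left_comm] using hΨ.const_mul c
  rw [Set.mem_sdiff, mem_Kk_psiJ_iff_isApproximable hj hΨ hanti hζ htr]
  simp only [mem_iUnion, not_exists]
  exact and_congr_right' (forall₂_congr fun c hc => not_congr (hscaled c hc))

theorem admissible_intersection_uncountable_general (k : ℕ) (hk : 1 ≤ k) (Ψ : ℝ → ℝ)
    (hpos : ∀ x : ℝ, 0 < x → 0 < Ψ x)
    (hdecay : Tendsto (fun x : ℝ => x ^ (2 * k - 1) * Ψ x) atTop (nhds 0))
    (hanti : ∃ X, AntitoneOn Ψ (Ici X))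
    (a b : ℝ) (ha : -(1 / 2) ≤ a) (hab : a < b) (hb : b ≤ 1 / 2) :
    ¬ ((⋂ j ∈ Icc 1 k,
          (Kk j (fun q : ℕ => psiJ Ψ j q) \
            ⋃ c ∈ Ioo (0 : ℝ) 1, Kk j (fun q : ℕ => c * psiJ Ψ j q))) ∩
        Ioo a b).Countable := by
  intro hcount
  obtain ⟨X, hX⟩ := hanti
  have hlim : Tendsto (fun q : ℕ => (q : ℝ) * Ψ q) atTop (nhds 0) := by
    have := tendsto_pow_mul_atTop_of_le (show 1 ≤ 2 * k - 1 by omega) hdecay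
    simp only [pow_one] at this
    exact this.comp tendsto_natCast_atTop_atTop
  refine not_countable_isExactlyApproximable (ψ := fun q => Ψ q)
    (fun q hq => hpos q (Nat.cast_pos.2 hq))
    ⟨⌈X⌉₊, fun m hm n hn hmn => hX (Nat.ceil_le.1 hm) (Nat.ceil_le.1 hn) (Nat.cast_le.2 hmn)⟩
    hlim hab ((hcount.union (Algebraic.countable ℤ ℝ)).mono ?_)
  rintro ζ ⟨hζ, hexact⟩
  refine or_iff_not_imp_right.2 fun htr => ⟨mem_iInter₂.2 fun j hj => ?_, hζ⟩
  have hζ' : |ζ| < 1 / 2 := abs_lt.2 ⟨ha.trans_lt hζ.1, hζ.2.trans_le hb⟩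
  have hj' : 2 * j - 1 ≤ 2 * k - 1 := by have := hj.2; omega
  exact (mem_Kk_psiJ_diff_iff_isExactlyApproximable (Nat.one_le_iff_ne_zero.1 hj.1)
    (tendsto_pow_mul_atTop_of_le hj' hdecay) ⟨X, hX⟩ hζ' htr).2 hexact

/-- If `Ψ` is admissible of degree `k`, then for every non-empty open interval
`(a, b) ⊆ (-1/2, 1/2)` the set `⋂_{1≤j≤k} (𝒦_j(Ψ_j) \ ⋃_{0<c<1} 𝒦_j(cΨ_j)) ∩ (a, b)`
is uncountable. -/
theorem admissible_intersection_uncountable (k : ℕ) (hk : 1 ≤ k) (Ψ : ℝ → ℝ)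
    (hpos : ∀ x : ℝ, 0 < x → 0 < Ψ x)
    (hdecay : Tendsto (fun x : ℝ => x ^ (2 * k - 1) * Ψ x) atTop (nhds 0))
    (hB0 : ∃ X : ℝ, 0 < X ∧ ∀ x y : ℝ, X ≤ x → x ≤ y → (y / x) ^ (k - 1) ≤ Ψ x / Ψ y)
    (a b : ℝ) (ha : -(1 / 2) ≤ a) (hab : a < b) (hb : b ≤ 1 / 2) :
    ¬ ((⋂ j ∈ Icc 1 k,
          (Kk j (fun q : ℕ => psiJ Ψ j q) \
            ⋃ c ∈ Ioo (0 : ℝ) 1, Kk j (fun q : ℕ => c * psiJ Ψ j q))) ∩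
        Ioo a b).Countable := by
  obtain ⟨X, hX, hdiv⟩ := hB0
  have hanti : AntitoneOn Ψ (Ici X) := fun x hx y hy hxy =>
    (one_le_div (hpos y (hX.trans_le hy))).1
      ((one_le_pow₀ ((one_le_div (hX.trans_le hx)).2 hxy)).trans (hdiv x y hx hxy))
  exact admissible_intersection_uncountable_general k hk Ψ hpos hdecay ⟨X, hanti⟩ a b ha hab hb
end
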